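/- arXiv:2510.14582 — 2 statements merged into one kernel-verified Lean document; each statement's English description precedes it below -/
import Mathlib

section
/- Let G be the CPDAG of the Markov equivalence class of a DAG on a finite node set V, and let X, Y ∈ V be distinct nodes such that X is a possible ancestor of Y in G but X is not an explicit ancestor of Y in G. Then no set S ⊆ V ∖ {X, Y} is a valid adjustment set for (X, Y) in every DAG of the Markov equivalence class represented by G. -/
/-- A directed acyclic graph on node set `V`: a directed edge relation with no
directed cycles (no edge `a → b` together with a directed path from `b` back to `a`). -/
structure Dag (V : Type*) where
  edge : V → V → Prop
  acyclic : ∀ a b : V, edge a b → ¬ Relation.ReflTransGen edge b a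

variable {V : Type*}

namespace Dag

/-- `a` is an ancestor of `b` (equivalently, `b` is a descendant of `a`):
there is a directed path from `a` to `b`; every node is its own ancestor. -/
def Anc (D : Dag V) (a b : V) : Prop := Relation.ReflTransGen D.edge a b

/-- `a` and `b` are adjacent (joined by an edge in either direction). -/
def Adj (D : Dag V) (a b : V) : Prop := D.edge a b ∨ D.edge b a

/-- The parents of `x` in the DAG `D`. -/
def Pa (D : Dag V) (x : V) : Set V := {a | D.edge a x}

/-- The Markov blanket of `x`: parents, children, and parents of children of `x`
(excluding `x` itself). -/
def MB (D : Dag V) (x : V) : Set V :=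
  {v | v ≠ x ∧ (D.edge v x ∨ D.edge x v ∨ ∃ c : V, D.edge x c ∧ D.edge v c)}

end Dag

/-- A path between `x` and `y` with respect to an adjacency relation `A`:
a sequence of distinct nodes, starting at `x` and ending at `y`, in which
consecutive nodes are adjacent. `n` is the number of edges of the path. -/
structure GPath (A : V → V → Prop) (x y : V) where
  n : ℕ
  f : Fin (n + 1) → V
  inj : Function.Injective f
  first : f ⟨0, by omega⟩ = x
  last : f ⟨n, by omega⟩ = y
  adj : ∀ i : Fin n, A (f i.castSucc) (f i.succ)

namespace GPath

/-- The non-endpoint node at position `i` of the path `p` is a collider with respect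
to the directed edge relation `E`: both incident edges of the path point into it. -/
def ColliderAt {A : V → V → Prop} {x y : V} (p : GPath A x y)
    (E : V → V → Prop) (i : ℕ) : Prop :=
  ∃ (_ : 0 < i) (_ : i < p.n),
    E (p.f ⟨i - 1, by omega⟩) (p.f ⟨i, by omega⟩) ∧
    E (p.f ⟨i + 1, by omega⟩) (p.f ⟨i, by omega⟩)

/-- The path `p` is blocked by the node set `S` in the DAG `D`: it contains a
non-collider that lies in `S`, or a collider such that neither the collider nor any
of its descendants lies in `S`. -/
def Blocked {A : V → V → Prop} {x y : V} (p : GPath A x y)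
    (D : Dag V) (S : Set V) : Prop :=
  ∃ (i : ℕ) (_ : 0 < i) (_ : i < p.n),
    (¬ p.ColliderAt D.edge i ∧ p.f ⟨i, by omega⟩ ∈ S) ∨
    (p.ColliderAt D.edge i ∧ ∀ d : V, D.Anc (p.f ⟨i, by omega⟩) d → d ∉ S)

end GPath

namespace Dag

/-- `x` and `y` are d-separated by `S` in the DAG `D`: every path between `x` and `y`
is blocked by `S`. -/
def dSep (D : Dag V) (x y : V) (S : Set V) : Prop :=
  ∀ p : GPath D.Adj x y, p.Blocked D S

/-- Two DAGs on the same node set are Markov equivalent if they have exactly the same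
d-separation relations. -/
def MEquiv (D D' : Dag V) : Prop :=
  ∀ (x y : V) (S : Set V), D.dSep x y S ↔ D'.dSep x y S

/-- The edge between `a` and `b` is directed `a → b` in the CPDAG of the Markov
equivalence class of `D`: the edge `a → b` holds in every DAG Markov equivalent to `D`. -/
def CpDir (D : Dag V) (a b : V) : Prop :=
  ∀ D' : Dag V, D.MEquiv D' → D'.edge a b

/-- The edge between `a` and `b` is undirected (`a − b`) in the CPDAG: `a` and `b` are
adjacent (the CPDAG has the same adjacencies as the DAGs of the MEC) but the edge is not
directed either way in the CPDAG. -/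
def CpUndir (D : Dag V) (a b : V) : Prop :=
  D.Adj a b ∧ ¬ D.CpDir a b ∧ ¬ D.CpDir b a

/-- `Pa_G(a)`: the nodes with a directed edge into `a` in the CPDAG. -/
def CpPa (D : Dag V) (a : V) : Set V := {p | D.CpDir p a}

/-- `Ch_G(a)`: the nodes `b` with the edge directed `a → b` in the CPDAG. -/
def CpCh (D : Dag V) (a : V) : Set V := {c | D.CpDir a c}

/-- `Sib_G(a)`: the nodes joined to `a` by an undirected edge in the CPDAG. -/
def CpSib (D : Dag V) (a : V) : Set V := {s | D.CpUndir a s}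

end Dag

namespace GPath

/-- `p` is a possibly directed path in the CPDAG: no edge on it is directed
backwards (as `V_i ← V_{i+1}`) in the CPDAG. -/
def CpPossiblyDirected {D : Dag V} {x y : V} (p : GPath D.Adj x y) : Prop :=
  ∀ i : Fin p.n, ¬ D.CpDir (p.f i.succ) (p.f i.castSucc)

/-- `p` is a (fully) directed path in the CPDAG: every edge on it is directed
forwards in the CPDAG. -/
def CpDirected {D : Dag V} {x y : V} (p : GPath D.Adj x y) : Prop :=
  ∀ i : Fin p.n, D.CpDir (p.f i.castSucc) (p.f i.succ)

/-- `p` is a directed path from `x` to `y` in the DAG `D` itself. -/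
def DirectedIn {D : Dag V} {x y : V} (p : GPath D.Adj x y) : Prop :=
  ∀ i : Fin p.n, D.edge (p.f i.castSucc) (p.f i.succ)

/-- `p` is unshielded: for every three consecutive nodes on it, the first and the
third are non-adjacent. -/
def Unshielded {D : Dag V} {x y : V} (p : GPath D.Adj x y) : Prop :=
  ∀ (i : ℕ) (_ : i + 2 ≤ p.n), ¬ D.Adj (p.f ⟨i, by omega⟩) (p.f ⟨i + 2, by omega⟩)

end GPath

namespace Dag

/-- `x` is a possible ancestor of `y` in the CPDAG: there is a possibly directed path
from `x` to `y`. -/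
def PossAn (D : Dag V) (x y : V) : Prop :=
  ∃ p : GPath D.Adj x y, p.CpPossiblyDirected

/-- `x` is an explicit ancestor of `y` in the CPDAG: there is a fully directed path
from `x` to `y` in the CPDAG. -/
def ExplAn (D : Dag V) (x y : V) : Prop :=
  ∃ p : GPath D.Adj x y, p.CpDirected

/-- The CPDAG is amenable relative to `(x, y)`: every possibly directed path from
`x` to `y` starts with a directed edge out of `x`. -/
def Amenable (D : Dag V) (x y : V) : Prop :=
  ∀ p : GPath D.Adj x y, p.CpPossiblyDirected →
    ∀ _ : 0 < p.n, D.CpDir (p.f ⟨0, by omega⟩) (p.f ⟨1, by omega⟩)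

/-- `S` is a valid adjustment set for `(x, y)` in the DAG `D`:
(i) no element of `S` is a descendant of any node `w ≠ x` lying on a directed path
from `x` to `y`, and (ii) every path between `x` and `y` that is not a directed path
from `x` to `y` is blocked by `S`. -/
def ValidAdjustment (D : Dag V) (x y : V) (S : Set V) : Prop :=
  (∀ s ∈ S, ∀ w : V, w ≠ x → D.Anc x w → D.Anc w y → ¬ D.Anc w s) ∧
  (∀ p : GPath D.Adj x y, ¬ p.DirectedIn → p.Blocked D S)

/-- `Cn_D(x, y)`: the nodes `w ≠ x` lying on some directed path from `x` to `y` in `D`. -/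
def Cn (D : Dag V) (x y : V) : Set V := {w | w ≠ x ∧ D.Anc x w ∧ D.Anc w y}

end Dag

namespace NCVA

open Classical

/-- Same skeleton and same unshielded colliders. -/
def VEq (D D' : Dag V) : Prop :=
  (∀ a b, D.Adj a b ↔ D'.Adj a b) ∧
  ∀ a b c, a ≠ c → ¬ D.Adj a c →
    ((D.edge a b ∧ D.edge c b) ↔ (D'.edge a b ∧ D'.edge c b))

/-- Nodes reachable from `s` by an active walk, with the mark of the last edge at the node
(`true` for an arrowhead). -/
inductive Act (E : V → V → Prop) (S : Set V) (s : V) : V → Bool → Prop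
  | out0 {v} : E s v → Act E S s v true
  | in0 {v} : E v s → Act E S s v false
  | out {v w m} : Act E S s v m → v ∉ S → E v w → Act E S s w true
  | inT {v w} : Act E S s v false → v ∉ S → E w v → Act E S s w false
  | inC {v w} : Act E S s v true → v ∈ S → E w v → Act E S s w false

def Conn (D : Dag V) (s t : V) (S : Set V) : Prop := s = t ∨ ∃ m, Act D.edge S s t m

theorem edge_irrefl (D : Dag V) (a : V) : ¬ D.edge a a :=
  fun h => D.acyclic a a h Relation.ReflTransGen.refl

theorem edge_asymm (D : Dag V) {a b : V} (h : D.edge a b) : ¬ D.edge b a :=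
  fun h' => D.acyclic a b h (Relation.ReflTransGen.single h')

theorem adj_symm (D : Dag V) {a b : V} (h : D.Adj a b) : D.Adj b a := Or.symm h

theorem adj_ne (D : Dag V) {a b : V} (h : D.Adj a b) : a ≠ b := by
  rintro rfl
  rcases h with h | h <;> exact edge_irrefl D _ h

theorem act_detour (D : Dag V) (S : Set V) (s : V) {v d : V} (had : D.Anc v d) (hd : d ∈ S) :
    ∀ w, Act D.edge S s v true → D.edge w v → Act D.edge S s w false := by
  induction had using Relation.ReflTransGen.head_induction_on with
  | refl => intro w h e; exact Act.inC h hd e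
  | head e1 _ ih =>
    intro w h e
    rename_i a c _
    by_cases ha : a ∈ S
    · exact Act.inC h ha e
    · exact Act.inT (ih _ (Act.out h ha e1) e1) ha e

/-- Unblocked path as a function on the naturals. -/
def UPath (D : Dag V) (S : Set V) (s w : V) (n : ℕ) (f : ℕ → V) : Prop :=
  f 0 = s ∧ f n = w ∧ (∀ i j, i ≤ n → j ≤ n → f i = f j → i = j) ∧
  (∀ i, i < n → D.Adj (f i) (f (i+1))) ∧
  ∀ i, i + 1 < n →
    ((D.edge (f i) (f (i+1)) ∧ D.edge (f (i+2)) (f (i+1)) → ∃ d ∈ S, D.Anc (f (i+1)) d) ∧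
     (¬ (D.edge (f i) (f (i+1)) ∧ D.edge (f (i+2)) (f (i+1))) → f (i+1) ∉ S))

theorem upath_act {D : Dag V} {S : Set V} {s w : V} {n : ℕ} {f : ℕ → V}
    (h : UPath D S s w n f) : ∀ k, k + 1 ≤ n →
    (D.edge (f k) (f (k+1)) → Act D.edge S s (f (k+1)) true) ∧
    (D.edge (f (k+1)) (f k) → Act D.edge S s (f (k+1)) false) := by
  obtain ⟨h0, hn, hinj, hadj, hst⟩ := h
  intro k
  induction k with
  | zero =>
    intro _
    rw [h0]
    exact ⟨Act.out0, Act.in0⟩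
  | succ k ih =>
    intro hk
    obtain ⟨i1, i2⟩ := ih (by omega)
    obtain ⟨s1, s2⟩ := hst k (by omega)
    have ha := hadj k (by omega)
    constructor
    · intro e
      have hns : f (k+1) ∉ S := s2 (fun hh => edge_asymm D e hh.2)
      rcases ha with ha | ha
      · exact Act.out (i1 ha) hns e
      · exact Act.out (i2 ha) hns e
    · intro e
      rcases ha with ha | ha
      · obtain ⟨d, hd, hda⟩ := s1 ⟨ha, e⟩
        exact act_detour D S s hda hd _ (i1 ha) e
      · exact Act.inT (i2 ha) (s2 (fun hh => edge_asymm D ha hh.1)) e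

theorem upath_conn {D : Dag V} {S : Set V} {s w : V} {n : ℕ} {f : ℕ → V}
    (h : UPath D S s w n f) : Conn D s w S := by
  rcases n with _ | k
  · left; rw [← h.1, ← h.2.1]
  · right
    have h1 := upath_act h k le_rfl
    have h2 := h.2.2.2.1 k (by omega)
    rw [← h.2.1]
    rcases h2 with h2 | h2
    · exact ⟨_, h1.1 h2⟩
    · exact ⟨_, h1.2 h2⟩

theorem upath_prefix {D : Dag V} {S : Set V} {s w : V} {n : ℕ} {f : ℕ → V}
    (h : UPath D S s w n f) (j : ℕ) (hj : j ≤ n) : UPath D S s (f j) j f := by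
  obtain ⟨h0, hn, hinj, hadj, hst⟩ := h
  exact ⟨h0, rfl, fun a b ha hb => hinj a b (by omega) (by omega),
    fun i hi => hadj i (by omega), fun i hi => hst i (by omega)⟩

theorem upath_ext {D : Dag V} {S : Set V} {s v w : V} {n : ℕ} {f : ℕ → V}
    (h : UPath D S s v n f) (ha : D.Adj v w) (hw : ∀ i ≤ n, f i ≠ w)
    (hk : ∀ k, n = k + 1 →
      ((D.edge (f k) v ∧ D.edge w v → ∃ d ∈ S, D.Anc v d) ∧
       (¬ (D.edge (f k) v ∧ D.edge w v) → v ∉ S))) :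
    UPath D S s w (n+1) (fun i => if i ≤ n then f i else w) := by
  obtain ⟨h0, hn, hinj, hadj, hst⟩ := h
  refine ⟨by simpa using h0, by simp, ?_, ?_, ?_⟩
  · intro i j hi hj
    by_cases h1 : i ≤ n <;> by_cases h2 : j ≤ n
    · simpa [h1, h2] using hinj i j h1 h2
    · simpa [h1, h2] using fun hh => absurd hh (hw i h1)
    · simpa [h1, h2] using fun hh => absurd hh.symm (hw j h2)
    · intros; omega
  · intro i hi
    by_cases h1 : i + 1 ≤ n
    · simpa [h1, show i ≤ n by omega] using hadj i (by omega)
    · have : i = n := by omega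
      subst this
      simpa [hn] using ha
  · intro i hi
    by_cases h1 : i + 2 ≤ n
    · simpa [h1, show i ≤ n by omega, show i + 1 ≤ n by omega] using hst i (by omega)
    · have : n = i + 1 := by omega
      have := hk i this
      subst n
      simpa [hn] using this

theorem upath_chain {D : Dag V} {S : Set V} {s v : V} {n : ℕ} {f : ℕ → V}
    (h : UPath D S s v n f) (j : ℕ) (he : D.edge (f j) (f (j+1))) :
    ∀ i, j + 1 + i ≤ n → (∃ d ∈ S, D.Anc (f j) d) ∨
      (D.Anc (f j) (f (j+1+i)) ∧ D.edge (f (j+i)) (f (j+i+1))) := by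
  obtain ⟨h0, hn, hinj, hadj, hst⟩ := h
  intro i
  induction i with
  | zero => intro _; right; exact ⟨Relation.ReflTransGen.single he, he⟩
  | succ i ih =>
    intro hi
    rcases ih (by omega) with h1 | ⟨h1, h2⟩
    · exact Or.inl h1
    · have e1 : j + 1 + i = j + i + 1 := by omega
      have e2 : j + 1 + (i + 1) = j + i + 2 := by omega
      have e3 : j + (i + 1) = j + i + 1 := by omega
      rw [e1] at h1
      rw [e2, e3]
      rcases hadj (j+i+1) (by omega) with h3 | h3
      · right
        exact ⟨Relation.ReflTransGen.tail h1 h3, h3⟩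
      · left
        obtain ⟨d, hd, hda⟩ := (hst (j+i) (by omega)).1 ⟨h2, h3⟩
        exact ⟨d, hd, h1.trans hda⟩

/-- Invariant: an unblocked path that may replace an active walk. -/
def PInv (D : Dag V) (S : Set V) (s w : V) (m : Bool) : Prop :=
  ∃ n f, UPath D S s w n f ∧ ∀ k, n = k + 1 →
    ((D.edge (f k) w ∧ (m = false → ∃ d ∈ S, D.Anc w d)) ∨
     (D.edge w (f k) ∧ (m = true → w ∉ S)))

theorem pinv_step {D : Dag V} {S : Set V} {s v w : V} {n : ℕ} {f : ℕ → V}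
    (h : UPath D S s v n f) (m : Bool)
    (ha : (m = true ∧ D.edge v w) ∨ (m = false ∧ D.edge w v))
    (hk : ∀ k, n = k + 1 →
      ((D.edge (f k) v ∧ D.edge w v → ∃ d ∈ S, D.Anc v d) ∧
       (¬ (D.edge (f k) v ∧ D.edge w v) → v ∉ S))) : PInv D S s w m := by
  have hadj : D.Adj v w := by
    rcases ha with h | h
    · exact Or.inl h.2
    · exact Or.inr h.2
  by_cases hw : ∀ i ≤ n, f i ≠ w
  · refine ⟨n+1, _, upath_ext h hadj hw hk, ?_⟩
    intro k hk'
    obtain rfl : n = k := by omega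
    simp only [le_refl, if_true]
    rw [h.2.1]
    rcases ha with ⟨rfl, h2⟩ | ⟨rfl, h2⟩
    · left; exact ⟨h2, by simp⟩
    · right; exact ⟨h2, by simp⟩
  · push Not at hw
    obtain ⟨j, hj, hjw⟩ := hw
    have hjn : j < n := by
      rcases lt_or_eq_of_le hj with h1 | h1
      · exact h1
      · exfalso
        subst h1
        exact adj_ne D hadj (h.2.1.symm.trans hjw)
    have hp := upath_prefix h j hj
    refine ⟨j, f, hjw ▸ hp, ?_⟩
    intro k hjk
    subst hjk
    have hst := h.2.2.2.2 k (by omega)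
    rw [hjw] at hst
    have hadk := h.2.2.2.1 k (by omega)
    rw [hjw] at hadk
    rcases hadk with hadk | hadk
    · left
      refine ⟨hadk, ?_⟩
      rintro rfl
      have hwv : D.edge w v := by simpa using ha
      rcases h.2.2.2.1 (k+1) hjn with h3 | h3
      · rcases upath_chain h (k+1) h3 (n - (k+2)) (by omega) with h4 | ⟨h4, h5⟩
        · simpa [hjw] using h4
        · have e1 : k + 1 + 1 + (n - (k+2)) = n := by omega
          have e2 : k + 1 + (n - (k+2)) = n - 1 := by omega
          have e3 : n - 1 + 1 = n := by omega
          rw [e2, e3, h.2.1] at h5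
          obtain ⟨d, hd, hda⟩ := (hk (n-1) (by omega)).1 ⟨h5, hwv⟩
          exact ⟨d, hd, Relation.ReflTransGen.head hwv hda⟩
      · rw [hjw] at h3
        exact hst.1 ⟨hadk, h3⟩
    · right
      refine ⟨hadk, fun _ => hst.2 (fun hh => edge_asymm D hadk hh.1)⟩

theorem act_pinv {D : Dag V} {S : Set V} {s w : V} {m : Bool}
    (h : Act D.edge S s w m) : PInv D S s w m := by
  have h00 : UPath D S s s 0 (fun _ => s) :=
    ⟨rfl, rfl, fun i j hi hj _ => by omega, fun i hi => by omega, fun i hi => by omega⟩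
  induction h with
  | out0 e => exact pinv_step h00 _ (Or.inl ⟨rfl, e⟩) (fun k hk => by omega)
  | in0 e => exact pinv_step h00 _ (Or.inr ⟨rfl, e⟩) (fun k hk => by omega)
  | out _ hv e ih =>
    obtain ⟨n, f, h, hk⟩ := ih
    exact pinv_step h _ (Or.inl ⟨rfl, e⟩)
      (fun k hk' => ⟨fun hh => absurd hh.2 (edge_asymm D e), fun _ => hv⟩)
  | inT _ hv e ih =>
    obtain ⟨n, f, h, hk⟩ := ih
    refine pinv_step h _ (Or.inr ⟨rfl, e⟩) (fun k hk' => ⟨fun hh => ?_, fun _ => hv⟩)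
    rcases hk k hk' with h1 | h1
    · exact h1.2 rfl
    · exact absurd hh.1 (edge_asymm D h1.1)
  | inC _ hv e ih =>
    obtain ⟨n, f, h, hk⟩ := ih
    refine pinv_step h _ (Or.inr ⟨rfl, e⟩)
      (fun k hk' => ⟨fun hh => ⟨_, hv, Relation.ReflTransGen.refl⟩, fun hh => ?_⟩)
    rcases hk k hk' with h1 | h1
    · exact absurd ⟨h1.1, e⟩ hh
    · exact h1.2 rfl

theorem conn_upath {D : Dag V} {S : Set V} {s w : V} (h : Conn D s w S) :
    ∃ n f, UPath D S s w n f := by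
  rcases h with rfl | ⟨m, h⟩
  · exact ⟨0, fun _ => s, rfl, rfl, fun i j hi hj _ => by omega,
      fun i hi => by omega, fun i hi => by omega⟩
  · obtain ⟨n, f, h, _⟩ := act_pinv h
    exact ⟨n, f, h⟩

theorem dSep_iff (D : Dag V) (s t : V) (S : Set V) : D.dSep s t S ↔ ¬ Conn D s t S := by
  constructor
  · intro hd hc
    obtain ⟨n, f, h0, hn, hinj, hadj, hst⟩ := conn_upath hc
    let p : GPath D.Adj s t :=
      { n := n
        f := fun i => f i.val
        inj := fun i j hij => Fin.ext (hinj _ _ (by omega) (by omega) hij)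
        first := h0
        last := hn
        adj := fun i => hadj i.val i.isLt }
    obtain ⟨i, hi0, hin, hb⟩ := hd p
    obtain ⟨k, rfl⟩ : ∃ k, i = k + 1 := ⟨i - 1, by omega⟩
    have hs := hst k hin
    have hcol : p.ColliderAt D.edge (k+1) ↔
        (D.edge (f k) (f (k+1)) ∧ D.edge (f (k+2)) (f (k+1))) :=
      ⟨fun ⟨_, _, h⟩ => h, fun h => ⟨hi0, hin, h⟩⟩
    rcases hb with ⟨h1, h2⟩ | ⟨h1, h2⟩
    · exact hs.2 (fun hh => h1 (hcol.2 hh)) h2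
    · obtain ⟨d, hd, hda⟩ := hs.1 (hcol.1 h1)
      exact h2 d hda hd
  · intro hc p
    by_contra hb
    apply hc
    have key : ∀ i, (hi : i ≤ p.n) → p.f ⟨min i p.n, by omega⟩ = p.f ⟨i, by omega⟩ := by
      intro i hi
      congr 2
      omega
    apply upath_conn (n := p.n) (f := fun i => p.f ⟨min i p.n, by omega⟩)
    refine ⟨?_, ?_, ?_, ?_, ?_⟩
    · exact (key 0 (by omega)).trans p.first
    · exact (key _ le_rfl).trans p.last
    · intro i j hi hj h
      have := congrArg Fin.val (p.inj h)
      simp at this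
      omega
    · intro i hi
      simp only [key i (by omega), key (i+1) (by omega)]
      exact p.adj ⟨i, hi⟩
    · intro i hi
      simp only [key i (by omega), key (i+1) (by omega), key (i+2) (by omega)]
      have hcol : p.ColliderAt D.edge (i+1) ↔
        (D.edge (p.f ⟨i, by omega⟩) (p.f ⟨i+1, by omega⟩) ∧
         D.edge (p.f ⟨i+2, by omega⟩) (p.f ⟨i+1, by omega⟩)) :=
        ⟨fun ⟨_, _, h⟩ => h, fun h => ⟨by omega, hi, h⟩⟩
      constructor
      · intro hh
        by_contra hno
        push Not at hno
        exact hb ⟨i+1, by omega, hi, Or.inr ⟨hcol.2 hh, fun d hd hdS => hno d hdS hd⟩⟩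
      · intro hh hS
        exact hb ⟨i+1, by omega, hi, Or.inl ⟨fun h => hh (hcol.1 h), hS⟩⟩

theorem mequiv_iff (D D' : Dag V) :
    D.MEquiv D' ↔ ∀ x y S, Conn D x y S ↔ Conn D' x y S := by
  unfold Dag.MEquiv
  simp only [dSep_iff, not_iff_not]

theorem exists_rank [Finite V] (D : Dag V) : ∃ ρ : V → ℕ, ∀ u v, D.edge u v → ρ u < ρ v := by
  refine ⟨fun v => {u | D.Anc u v}.ncard, fun u v e => ?_⟩
  apply Set.ncard_lt_ncard _ (Set.toFinite _)
  refine ⟨fun w hw => Relation.ReflTransGen.tail hw e, fun h => ?_⟩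
  exact D.acyclic u v e (h (show v ∈ {w | D.Anc w v} from Relation.ReflTransGen.refl))

theorem rank_anc {D : Dag V} {ρ : V → ℕ} (hρ : ∀ u v, D.edge u v → ρ u < ρ v) {u v : V}
    (h : D.Anc u v) : ρ u ≤ ρ v := by
  induction h with
  | refl => exact le_rfl
  | tail _ e ih => exact ih.trans (hρ _ _ e).le

/-- Build a DAG from a two-level rank. -/
def ofRank (E : V → V → Prop) (k1 k2 : V → ℕ)
    (h : ∀ u v, E u v → k1 u < k1 v ∨ (k1 u = k1 v ∧ k2 u < k2 v)) : Dag V where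
  edge := E
  acyclic := by
    intro a b e hba
    have key : ∀ c, Relation.ReflTransGen E b c →
        k1 b < k1 c ∨ (k1 b = k1 c ∧ k2 b ≤ k2 c) := by
      intro c hc
      induction hc with
      | refl => right; exact ⟨rfl, le_rfl⟩
      | tail _ e' ih =>
        have := h _ _ e'
        omega
    have := key _ hba
    have := h _ _ e
    omega


/-! ### From Markov equivalence to skeleton and v-structures -/

theorem adj_conn {D : Dag V} {a b : V} (h : D.Adj a b) (S : Set V) : Conn D a b S := by
  rcases h with h | h
  · exact Or.inr ⟨_, Act.out0 h⟩
  · exact Or.inr ⟨_, Act.in0 h⟩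

theorem act_pa {D : Dag V} {x v : V} {m : Bool} (h : Act D.edge {p | D.edge p x} x v m) :
    (m = true ∧ Relation.TransGen D.edge x v) ∨ (m = false ∧ D.edge v x) := by
  have acy : ∀ v, Relation.TransGen D.edge x v → ¬ D.edge v x :=
    fun v h1 h2 => D.acyclic _ _ h2 h1.to_reflTransGen
  induction h with
  | out0 e => exact Or.inl ⟨rfl, Relation.TransGen.single e⟩
  | in0 e => exact Or.inr ⟨rfl, e⟩
  | out _ hv e ih =>
    rcases ih with ih | ih
    · exact Or.inl ⟨rfl, ih.2.tail e⟩
    · exact absurd ih.2 hv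
  | inT _ hv e ih =>
    rcases ih with ih | ih
    · simp at ih
    · exact absurd ih.2 hv
  | inC _ hv e ih =>
    rcases ih with ih | ih
    · exact absurd hv (acy _ ih.2)
    · simp at ih

theorem nonadj_sep {D : Dag V} {x y : V} (hne : x ≠ y) (h : ¬ D.Adj x y) (hd : ¬ D.Anc x y) :
    ¬ Conn D x y {p | D.edge p x} := by
  rintro (rfl | ⟨m, hm⟩)
  · exact hne rfl
  · rcases act_pa hm with h1 | h1
    · exact hd h1.2.to_reflTransGen
    · exact h (Or.inr h1.2)

theorem anc_antisymm {D : Dag V} {x y : V} (h : D.Anc x y) (h' : D.Anc y x) : x = y := by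
  rcases Relation.ReflTransGen.cases_head h with h1 | ⟨c, h1, h2⟩
  · exact h1
  · exact absurd (h2.trans h') (D.acyclic _ _ h1)

theorem mequiv_symm {D D' : Dag V} (h : D.MEquiv D') : D'.MEquiv D :=
  fun x y S => (h x y S).symm

theorem mequiv_trans {D D' D'' : Dag V} (h : D.MEquiv D') (h' : D'.MEquiv D'') : D.MEquiv D'' :=
  fun x y S => (h x y S).trans (h' x y S)

theorem mequiv_adj_aux {D D' : Dag V} (h : D.MEquiv D') {a b : V} (hab : D.Adj a b) :
    D'.Adj a b := by
  rw [mequiv_iff] at h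
  by_contra hn
  have hne := adj_ne D hab
  by_cases hd : D'.Anc a b
  · have hd' : ¬ D'.Anc b a := fun h' => hne (anc_antisymm hd h')
    exact nonadj_sep hne.symm (fun h => hn (adj_symm _ h)) hd'
      ((h _ _ _).1 (adj_conn (adj_symm _ hab) _))
  · exact nonadj_sep hne hn hd ((h _ _ _).1 (adj_conn hab _))

theorem mequiv_v_aux {D D' : Dag V} (h : D.MEquiv D') {a b c : V} (hne : a ≠ c)
    (hn : ¬ D.Adj a c) (h1 : D.edge a b) (h2 : D.edge c b) : D'.edge a b ∧ D'.edge c b := by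
  wlog hd : ¬ D.Anc a c generalizing a c
  · push Not at hd
    exact (this hne.symm (fun h => hn (adj_symm _ h)) h2 h1
      (fun h' => hne (anc_antisymm hd h'))).symm
  have hs := nonadj_sep hne hn hd
  have hb : b ∉ {p | D.edge p a} := edge_asymm D h1
  have e1 := mequiv_adj_aux h (Or.inl h1 : D.Adj a b)
  have e2 := mequiv_adj_aux h (Or.inl h2 : D.Adj c b)
  rw [mequiv_iff] at h
  rw [h] at hs
  by_contra hcon
  apply hs
  right
  rcases e1 with e1 | e1 <;> rcases e2 with e2 | e2
  · exact absurd ⟨e1, e2⟩ hcon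
  · exact ⟨_, Act.out (Act.out0 e1) hb e2⟩
  · exact ⟨_, Act.inT (Act.in0 e1) hb e2⟩
  · exact ⟨_, Act.out (Act.in0 e1) hb e2⟩

theorem mequiv_veq {D D' : Dag V} (h : D.MEquiv D') : VEq D D' := by
  have ha : ∀ a b, D.Adj a b ↔ D'.Adj a b :=
    fun a b => ⟨mequiv_adj_aux h, mequiv_adj_aux (mequiv_symm h)⟩
  refine ⟨ha, fun a b c hne hn => ⟨fun hh => mequiv_v_aux h hne hn hh.1 hh.2, fun hh => ?_⟩⟩
  exact mequiv_v_aux (mequiv_symm h) hne (fun h => hn ((ha _ _).2 h)) hh.1 hh.2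

theorem veq_symm {D D' : Dag V} (h : VEq D D') : VEq D' D :=
  ⟨fun a b => (h.1 a b).symm, fun a b c hne hn =>
    (h.2 a b c hne (fun h' => hn ((h.1 _ _).1 h'))).symm⟩

theorem veq_trans {D D' D'' : Dag V} (h : VEq D D') (h' : VEq D' D'') : VEq D D'' :=
  ⟨fun a b => (h.1 a b).trans (h'.1 a b), fun a b c hne hn =>
    (h.2 a b c hne hn).trans (h'.2 a b c hne (fun h' => hn ((h.1 _ _).2 h')))⟩

/-! ### Covered edge reversal -/

/-- Edge relation after reversing `x → y`. -/
def revE (E : V → V → Prop) (x y u v : V) : Prop :=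
  (u = y ∧ v = x) ∨ (E u v ∧ ¬ (u = x ∧ v = y))

def Free (E : V → V → Prop) (S : Set V) (s v : V) : Prop :=
  s = v ∨ (v ∉ S ∧ Act E S s v false)

theorem Free.out {E : V → V → Prop} {S : Set V} {s v w : V} (h : Free E S s v) (e : E v w) :
    Act E S s w true := by
  rcases h with rfl | h
  · exact Act.out0 e
  · exact Act.out h.2 h.1 e

theorem Free.inn {E : V → V → Prop} {S : Set V} {s v w : V} (h : Free E S s v) (e : E w v) :
    Act E S s w false := by
  rcases h with rfl | h
  · exact Act.in0 e
  · exact Act.inT h.2 h.1 e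

/-- Invariant for covered edge reversal. -/
def RInv (E' : V → V → Prop) (S : Set V) (s x y v : V) (m : Bool) : Prop :=
  (v ≠ x → v ≠ y → Act E' S s v m) ∧
  (v = x → m = true → Act E' S s x true ∧ Act E' S s y true) ∧
  (v = y → m = false → Act E' S s y false) ∧
  (v = x → m = false → Act E' S s x false ∨ s = x ∨
    (y ∈ S ∧ Act E' S s x true ∧ Act E' S s y true) ∨ Free E' S s y) ∧
  (v = y → m = true → (Act E' S s x true ∧ Act E' S s y true) ∨ Free E' S s x ∨ Free E' S s y)

theorem rev_act {E : V → V → Prop} {S : Set V} {s x y : V} (hxy : E x y) (hne : x ≠ y)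
    (hyx : ¬ E y x) (hcov : ∀ p, p ≠ x → (E p y ↔ E p x)) (hirr : ∀ a, ¬ E a a)
    {v : V} {m : Bool} (h : Act E S s v m) : RInv (revE E x y) S s x y v m := by
  have e0 : revE E x y y x := Or.inl ⟨rfl, rfl⟩
  have eo : ∀ {u v}, E u v → (u ≠ x ∨ v ≠ y) → revE E x y u v := by
    intro u v h1 h2
    exact Or.inr ⟨h1, by tauto⟩
  have gen : ∀ {w m}, w ≠ x → w ≠ y → Act (revE E x y) S s w m →
      RInv (revE E x y) S s x y w m := fun h1 h2 h3 =>
    ⟨fun _ _ => h3, fun h => absurd h h1, fun h => absurd h h2, fun h => absurd h h1,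
      fun h => absurd h h2⟩
  have mkxt : Act (revE E x y) S s x true → Act (revE E x y) S s y true →
      RInv (revE E x y) S s x y x true := fun h1 h2 =>
    ⟨fun h => absurd rfl h, fun _ _ => ⟨h1, h2⟩, fun h => absurd h hne, fun _ h => by simp at h,
      fun h => absurd h hne⟩
  have mkxf : (Act (revE E x y) S s x false ∨ s = x ∨
      (y ∈ S ∧ Act (revE E x y) S s x true ∧ Act (revE E x y) S s y true) ∨
      Free (revE E x y) S s y) → RInv (revE E x y) S s x y x false := fun h1 =>
    ⟨fun h => absurd rfl h, fun _ h => by simp at h, fun h => absurd h hne, fun _ _ => h1,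
      fun h => absurd h hne⟩
  have mkyf : Act (revE E x y) S s y false → RInv (revE E x y) S s x y y false := fun h1 =>
    ⟨fun _ h => absurd rfl h, fun h => absurd h.symm hne, fun _ _ => h1,
      fun h => absurd h.symm hne, fun _ h => by simp at h⟩
  have mkyt : ((Act (revE E x y) S s x true ∧ Act (revE E x y) S s y true) ∨
      Free (revE E x y) S s x ∨ Free (revE E x y) S s y) →
      RInv (revE E x y) S s x y y true := fun h1 =>
    ⟨fun _ h => absurd rfl h, fun h => absurd h.symm hne, fun _ h => by simp at h,
      fun h => absurd h.symm hne, fun _ _ => h1⟩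
  -- steps from a node other than `x` and `y`
  have outG : ∀ {v w}, v ≠ x → v ≠ y → E v w →
      (∀ w, revE E x y v w → Act (revE E x y) S s w true) → RInv (revE E x y) S s x y w true := by
    intro v w h1 h2 e hh
    by_cases hwx : w = x
    · subst hwx
      exact mkxt (hh _ (eo e (Or.inl h1))) (hh _ (eo ((hcov _ h1).2 e) (Or.inl h1)))
    · by_cases hwy : w = y
      · subst hwy
        exact mkyt (Or.inl ⟨hh _ (eo ((hcov _ h1).1 e) (Or.inl h1)), hh _ (eo e (Or.inl h1))⟩)
      · exact gen hwx hwy (hh _ (eo e (Or.inl h1)))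
  have inG : ∀ {v w}, v ≠ x → v ≠ y → E w v →
      (∀ w, revE E x y w v → Act (revE E x y) S s w false) →
      RInv (revE E x y) S s x y w false := by
    intro v w h1 h2 e hh
    have := hh _ (eo e (Or.inr h2))
    by_cases hwx : w = x
    · subst hwx
      exact mkxf (Or.inl this)
    · by_cases hwy : w = y
      · subst hwy
        exact mkyf this
      · exact gen hwx hwy this
  have outX : ∀ {w}, E x w → (w ≠ y → Act (revE E x y) S s w true) →
      ((Act (revE E x y) S s x true ∧ Act (revE E x y) S s y true) ∨
      Free (revE E x y) S s x ∨ Free (revE E x y) S s y) →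
      RInv (revE E x y) S s x y w true := by
    intro w e h1 h2
    by_cases hwy : w = y
    · subst hwy; exact mkyt h2
    · exact gen (fun h => hirr x (h ▸ e)) hwy (h1 hwy)
  have inX : ∀ {w}, E w x → (w ≠ y → revE E x y w x → revE E x y w y →
      Act (revE E x y) S s w false) →
      RInv (revE E x y) S s x y w false := by
    intro w e h1
    have hwx : w ≠ x := fun h => hirr x (h ▸ e)
    have hwy : w ≠ y := fun h => hyx (h ▸ e)
    exact gen hwx hwy (h1 hwy (eo e (Or.inl hwx)) (eo ((hcov _ hwx).2 e) (Or.inl hwx)))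
  have outY : ∀ {w}, E y w → (revE E x y y w → Act (revE E x y) S s w true) →
      RInv (revE E x y) S s x y w true := by
    intro w e h1
    exact gen (fun h => hyx (h ▸ e)) (fun h => hirr y (h ▸ e)) (h1 (eo e (Or.inl hne.symm)))
  have inY : ∀ {w}, E w y → (revE E x y w x → revE E x y w y → Act (revE E x y) S s w false) →
      (Act (revE E x y) S s x false ∨ s = x ∨
      (y ∈ S ∧ Act (revE E x y) S s x true ∧ Act (revE E x y) S s y true) ∨
      Free (revE E x y) S s y) →
      RInv (revE E x y) S s x y w false := by
    intro w e h1 h2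
    by_cases hwx : w = x
    · subst hwx; exact mkxf h2
    · exact gen hwx (fun h => hirr y (h ▸ e))
        (h1 (eo ((hcov _ hwx).1 e) (Or.inl hwx)) (eo e (Or.inl hwx)))
  induction h with
  | @out0 w e =>
    have hf : Free (revE E x y) S s s := Or.inl rfl
    by_cases hsx : s = x
    · subst hsx
      exact outX e (fun hw => hf.out (eo e (Or.inr hw))) (Or.inr (Or.inl hf))
    · by_cases hsy : s = y
      · subst hsy
        exact outY e (fun e' => hf.out e')
      · exact outG hsx hsy e (fun w e' => hf.out e')
  | @in0 w e =>
    have hf : Free (revE E x y) S s s := Or.inl rfl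
    by_cases hsx : s = x
    · subst hsx
      exact inX e (fun _ e' _ => hf.inn e')
    · by_cases hsy : s = y
      · subst hsy
        exact inY e (fun _ e' => hf.inn e') (Or.inr (Or.inr (Or.inr hf)))
      · exact inG hsx hsy e (fun w e' => hf.inn e')
  | @out v w m _ hv e ih =>
    obtain ⟨i1, i2, i3, i4, i5⟩ := ih
    by_cases hvx : v = x
    · subst hvx
      cases m with
      | true =>
        have := i2 rfl rfl
        exact outX e (fun hw => Act.out this.1 hv (eo e (Or.inr hw))) (Or.inl this)
      | false =>
        rcases i4 rfl rfl with h | h | h | h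
        · exact outX e (fun hw => Act.out h hv (eo e (Or.inr hw))) (Or.inr (Or.inl (Or.inr ⟨hv, h⟩)))
        · exact outX e (fun hw => Free.out (Or.inl h) (eo e (Or.inr hw))) (Or.inr (Or.inl (Or.inl h)))
        · exact outX e (fun hw => Act.out h.2.1 hv (eo e (Or.inr hw))) (Or.inl h.2)
        · exact outX e (fun hw => Act.out (h.out e0) hv (eo e (Or.inr hw))) (Or.inr (Or.inr h))
    · by_cases hvy : v = y
      · subst hvy
        apply outY e
        intro e'
        cases m with
        | true =>
          rcases i5 rfl rfl with h | h | h
          · exact Act.out h.2 hv e'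
          · exact Act.out (h.inn e0) hv e'
          · exact h.out e'
        | false => exact Act.out (i3 rfl rfl) hv e'
      · exact outG hvx hvy e (fun w e' => Act.out (i1 hvx hvy) hv e')
  | @inT v w _ hv e ih =>
    obtain ⟨i1, i2, i3, i4, i5⟩ := ih
    by_cases hvx : v = x
    · subst hvx
      apply inX e
      intro hw e1 e2
      rcases i4 rfl rfl with h | h | h | h
      · exact Act.inT h hv e1
      · exact Free.inn (Or.inl h) e1
      · exact Act.inC h.2.2 h.1 e2
      · exact h.inn e2
    · by_cases hvy : v = y
      · subst hvy
        have := i3 rfl rfl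
        exact inY e (fun _ e2 => Act.inT this hv e2) (Or.inr (Or.inr (Or.inr (Or.inr ⟨hv, this⟩))))
      · exact inG hvx hvy e (fun w e' => Act.inT (i1 hvx hvy) hv e')
  | @inC v w _ hv e ih =>
    obtain ⟨i1, i2, i3, i4, i5⟩ := ih
    by_cases hvx : v = x
    · subst hvx
      exact inX e (fun _ e1 _ => Act.inC (i2 rfl rfl).1 hv e1)
    · by_cases hvy : v = y
      · subst hvy
        rcases i5 rfl rfl with h | h | h
        · exact inY e (fun _ e2 => Act.inC h.2 hv e2) (Or.inr (Or.inr (Or.inl ⟨hv, h⟩)))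
        · refine inY e (fun e1 _ => h.inn e1) ?_
          rcases h with h | h
          · exact Or.inr (Or.inl h)
          · exact Or.inl h.2
        · exact inY e (fun _ e2 => h.inn e2) (Or.inr (Or.inr (Or.inr h)))
      · exact inG hvx hvy e (fun w e' => Act.inC (i1 hvx hvy) hv e')

theorem rev_conn {D D' : Dag V} {x y : V} (hxy : D.edge x y)
    (hcov : ∀ p, p ≠ x → (D.edge p y ↔ D.edge p x)) (hE : D'.edge = revE D.edge x y)
    {s t : V} {S : Set V} (h : Conn D s t S) : Conn D' s t S := by
  have hne : x ≠ y := by rintro rfl; exact edge_irrefl D _ hxy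
  rcases h with h | ⟨m, h⟩
  · exact Or.inl h
  · have := rev_act hxy hne (edge_asymm D hxy) hcov (edge_irrefl D) h
    unfold Conn
    rw [hE]
    have e0 : revE D.edge x y y x := Or.inl ⟨rfl, rfl⟩
    obtain ⟨i1, i2, i3, i4, i5⟩ := this
    by_cases hx : t = x
    · subst hx
      cases m with
      | true => exact Or.inr ⟨_, (i2 rfl rfl).1⟩
      | false =>
        rcases i4 rfl rfl with h | h | h | h
        · exact Or.inr ⟨_, h⟩
        · exact Or.inl h
        · exact Or.inr ⟨_, h.2.1⟩
        · exact Or.inr ⟨_, h.out e0⟩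
    · by_cases hy : t = y
      · subst hy
        cases m with
        | true =>
          rcases i5 rfl rfl with h | h | h
          · exact Or.inr ⟨_, h.2⟩
          · exact Or.inr ⟨_, h.inn e0⟩
          · rcases h with h | h
            · exact Or.inl h
            · exact Or.inr ⟨_, h.2⟩
        | false => exact Or.inr ⟨_, i3 rfl rfl⟩
      · exact Or.inr ⟨_, i1 hx hy⟩

theorem rev_mequiv {D D' : Dag V} {x y : V} (hxy : D.edge x y)
    (hcov : ∀ p, p ≠ x → (D.edge p y ↔ D.edge p x)) (hE : D'.edge = revE D.edge x y) :
    D.MEquiv D' := by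
  have hne : x ≠ y := by rintro rfl; exact edge_irrefl D _ hxy
  rw [mequiv_iff]
  intro s t S
  refine ⟨rev_conn hxy hcov hE, rev_conn (x := y) (y := x) ?_ ?_ ?_⟩
  · rw [hE]; exact Or.inl ⟨rfl, rfl⟩
  · intro p hp
    rw [hE]
    unfold revE
    have := hcov p
    have h1 := edge_irrefl D x
    have h2 := edge_irrefl D y
    have h3 := edge_asymm D hxy
    by_cases hpx : p = x
    · subst hpx; simp [hp, h1, hne]
    · simp [hp, hpx, this hpx]
  · funext u v
    rw [hE]
    unfold revE
    have h3 := edge_asymm D hxy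
    apply propext
    constructor
    · intro h
      by_cases huv : u = x ∧ v = y
      · exact Or.inl huv
      · refine Or.inr ⟨Or.inr ⟨h, huv⟩, ?_⟩
        rintro ⟨rfl, rfl⟩
        exact h3 h
    · rintro (⟨rfl, rfl⟩ | ⟨h1 | h1, h2⟩)
      · exact hxy
      · exact absurd h1 h2
      · exact h1.1

theorem exists_rev [Finite V] (D : Dag V) {x y : V} (hxy : D.edge x y)
    (hcov : ∀ p, p ≠ x → (D.edge p y ↔ D.edge p x)) :
    ∃ D' : Dag V, D'.edge = revE D.edge x y := by
  obtain ⟨ρ, hρ⟩ := exists_rank D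
  have hne : x ≠ y := by rintro rfl; exact edge_irrefl D _ hxy
  refine ⟨ofRank (revE D.edge x y) (fun v => if v = y then ρ x else ρ v)
    (fun v => if v = y then 0 else 1) ?_, rfl⟩
  have h0 := hρ _ _ hxy
  rintro u v (⟨rfl, rfl⟩ | ⟨h, hn⟩)
  · simp [hne]
  · by_cases hu : u = y <;> by_cases hv : v = y
    · subst hu; subst hv; exact absurd h (edge_irrefl D _)
    · subst hu
      have := hρ _ _ h
      simp [hv]; omega
    · subst hv
      have hux : u ≠ x := fun h => hn ⟨h, rfl⟩
      have := hρ _ _ ((hcov u hux).1 h)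
      simp [hu]; omega
    · have := hρ _ _ h
      simp [hu, hv]; omega

theorem veq_mequiv [Finite V] (D' : Dag V) : ∀ (k : ℕ) (D : Dag V),
    {e : V × V | D.edge e.1 e.2 ∧ ¬ D'.edge e.1 e.2}.ncard = k → VEq D D' → D.MEquiv D' := by
  intro k
  induction k using Nat.strong_induction_on with
  | _ k ih =>
  intro D hk hV
  by_cases hall : ∀ u v, D.edge u v → D'.edge u v
  · have : D.edge = D'.edge := by
      funext u v
      apply propext
      refine ⟨hall u v, fun h => ?_⟩
      rcases (hV.1 u v).2 (Or.inl h) with h1 | h1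
      · exact h1
      · exact absurd (hall _ _ h1) (edge_asymm D' h)
    rw [mequiv_iff]
    unfold Conn
    rw [this]
    exact fun _ _ _ => Iff.rfl
  · push Not at hall
    obtain ⟨u0, v0, h0, h0'⟩ := hall
    obtain ⟨ρ, hρ⟩ := exists_rank D
    have flip : ∀ u v, D.edge u v → ¬ D'.edge u v → D'.edge v u := fun u v h1 h2 =>
      ((hV.1 u v).1 (Or.inl h1)).resolve_left h2
    have flop : ∀ u v, D'.edge u v → ¬ D.edge u v → D.edge v u := fun u v h1 h2 =>
      ((hV.1 u v).2 (Or.inl h1)).resolve_left h2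
    obtain ⟨y, ⟨x1, hx1, hx1'⟩, hymin⟩ := Set.exists_min_image
      {v | ∃ u, D.edge u v ∧ ¬ D'.edge u v} ρ (Set.toFinite _) ⟨v0, u0, h0, h0'⟩
    obtain ⟨x, ⟨hxy, hxy'⟩, hxmax⟩ := Set.exists_max_image
      {u | D.edge u y ∧ ¬ D'.edge u y} ρ (Set.toFinite _) ⟨x1, hx1, hx1'⟩
    have hne : x ≠ y := by rintro rfl; exact edge_irrefl D _ hxy
    have hsame : ∀ u v, D.edge u v → ρ v < ρ y → D'.edge u v := by
      intro u v h1 h2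
      by_contra h3
      have := hymin v ⟨u, h1, h3⟩
      omega
    have hyx' := flip _ _ hxy hxy'
    have c2 : ∀ z, D.edge z x → D.edge z y := by
      intro z hz
      have hz' := hsame _ _ hz (hρ _ _ hxy)
      have hzy : z ≠ y := by rintro rfl; exact edge_asymm D hxy hz
      by_contra hcon
      by_cases hadj : D.Adj z y
      · rcases hadj with h | h
        · exact hcon h
        · have := hρ _ _ h
          have := hρ _ _ hz
          have := hρ _ _ hxy
          omega
      · exact edge_asymm D hxy ((hV.2 z x y hzy hadj).2 ⟨hz', hyx'⟩).2
    have c1 : ∀ z, z ≠ x → D.edge z y → D.edge z x := by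
      intro z hzx hz
      by_contra hcon
      by_cases hadj : D.Adj z x
      · have hxz := hadj.resolve_left hcon
        have hzy' : D'.edge z y := by
          by_contra h3
          have := hxmax z ⟨hz, h3⟩
          have := hρ _ _ hxz
          omega
        have h4 := hsame _ _ hxz (hρ _ _ hz)
        exact D'.acyclic _ _ h4 (Relation.ReflTransGen.tail (Relation.ReflTransGen.single hzy') hyx')
      · exact hxy' ((hV.2 z y x hzx hadj).1 ⟨hz, hxy⟩).2
    have hcov : ∀ p, p ≠ x → (D.edge p y ↔ D.edge p x) := fun p hp => ⟨c1 p hp, c2 p⟩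
    obtain ⟨D1, hD1⟩ := exists_rev D hxy hcov
    have hm := rev_mequiv hxy hcov hD1
    refine mequiv_trans hm (ih _ ?_ D1 rfl (veq_trans (veq_symm (mequiv_veq hm)) hV))
    rw [← hk]
    apply Set.ncard_lt_ncard _ (Set.toFinite _)
    refine ⟨?_, fun h => ?_⟩
    · rintro ⟨u, v⟩ ⟨h1, h2⟩
      rw [hD1] at h1
      rcases h1 with ⟨h3, h4⟩ | h1
      · simp only at h2 h3 h4
        subst h3; subst h4
        exact absurd hyx' h2
      · exact ⟨h1.1, h2⟩
    · have := (h (show (x, y) ∈ _ from ⟨hxy, hxy'⟩)).1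
      rw [hD1] at this
      rcases this with ⟨h3, _⟩ | h3
      · exact hne h3
      · exact h3.2 ⟨rfl, rfl⟩

theorem mequiv_iff_veq [Finite V] (D D' : Dag V) : D.MEquiv D' ↔ VEq D D' :=
  ⟨mequiv_veq, veq_mequiv D' _ D rfl⟩

/-! ### Perfect elimination orders -/

theorem exists_bound [Finite V] (r : V → ℕ) : ∃ M, ∀ u, r u < M := by
  obtain ⟨M, hM⟩ := (Set.finite_range r).bddAbove
  exact ⟨M + 1, fun u => Nat.lt_succ_of_le (hM ⟨u, rfl⟩)⟩

theorem peo [Finite V] (D : Dag V) : ∀ (k : ℕ) (T : Set V), T.ncard = k →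
    (∀ u ∈ T, ∀ v ∈ T, ∀ w ∈ T, D.edge u w → D.edge v w → u ≠ v → D.Adj u v) →
    ∀ C ⊆ T, (∀ u ∈ C, ∀ v ∈ C, u ≠ v → D.Adj u v) →
    ∃ r : V → ℕ, (∀ u ∈ T, ∀ v ∈ T, r u = r v → u = v) ∧
      (∀ u ∈ T, ∀ v ∈ T, ∀ w ∈ T, D.Adj u w → D.Adj v w → r u < r w → r v < r w →
        u ≠ v → D.Adj u v) ∧
      ∀ u ∈ C, ∀ v ∈ T, v ∉ C → r u < r v := by
  obtain ⟨ρ, hρ⟩ := exists_rank D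
  intro k
  induction k with
  | zero =>
    intro T hT hmor C hC hcl
    have : T = ∅ := (Set.ncard_eq_zero (Set.toFinite _)).1 hT
    subst this
    exact ⟨fun _ => 0, by simp, by simp, by simp⟩
  | succ k ih =>
    intro T hT hmor C hC hcl
    have hne : T.Nonempty := by
      rw [← Set.ncard_pos (Set.toFinite _)]; omega
    obtain ⟨s, hs, hmax⟩ := Set.exists_max_image T ρ (Set.toFinite _) hne
    have hT' : (T \ {s}).ncard = k := by
      rw [Set.ncard_diff_singleton_of_mem hs]; omega
    have hmor' : ∀ u ∈ T \ {s}, ∀ v ∈ T \ {s}, ∀ w ∈ T \ {s}, D.edge u w → D.edge v w →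
        u ≠ v → D.Adj u v := fun u hu v hv w hw => hmor u hu.1 v hv.1 w hw.1
    have hin : ∀ u ∈ T, D.Adj u s → D.edge u s := by
      intro u hu h
      rcases h with h | h
      · exact h
      · have := hmax u hu
        have := hρ _ _ h
        omega
    by_cases hsC : s ∈ C
    · let N : Set V := {u | u ∈ T \ {s} ∧ D.Adj u s}
      obtain ⟨r, r1, r2, r3⟩ := ih (T \ {s}) hT' hmor' N (fun u hu => hu.1)
        (fun u hu v hv huv => hmor u hu.1.1 v hv.1.1 s hs (hin u hu.1.1 hu.2) (hin v hv.1.1 hv.2) huv)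
      obtain ⟨M, hM⟩ := exists_bound r
      have hCN : ∀ u ∈ C, u ≠ s → u ∈ N := fun u hu hus =>
        ⟨⟨hC hu, hus⟩, hcl u hu s hsC hus⟩
      let r' : V → ℕ := fun u => if u = s then 0 else if u ∈ C then r u + 1 else
        if u ∈ N then r u + 1 + M else r u + 1 + 2 * M
      have v0 : r' s = 0 := by simp [r']
      have v1 : ∀ u, u ≠ s → u ∈ C → r' u = r u + 1 := fun u h1 h2 => by simp [r', h1, h2]
      have v2 : ∀ u, u ≠ s → u ∉ C → u ∈ N → r' u = r u + 1 + M :=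
        fun u h1 h2 h3 => by simp [r', h1, h2, h3]
      have v3 : ∀ u, u ≠ s → u ∉ C → u ∉ N → r' u = r u + 1 + 2 * M :=
        fun u h1 h2 h3 => by simp [r', h1, h2, h3]
      have vv : ∀ u, (u = s ∧ r' u = 0) ∨ (u ≠ s ∧ u ∈ C ∧ u ∈ N ∧ r' u = r u + 1) ∨
          (u ≠ s ∧ u ∉ C ∧ u ∈ N ∧ r' u = r u + 1 + M) ∨
          (u ≠ s ∧ u ∉ C ∧ u ∉ N ∧ r' u = r u + 1 + 2 * M) := by
        intro u
        by_cases h1 : u = s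
        · left; exact ⟨h1, h1 ▸ v0⟩
        · by_cases h2 : u ∈ C
          · right; left; exact ⟨h1, h2, hCN u h2 h1, v1 u h1 h2⟩
          · by_cases h3 : u ∈ N
            · right; right; left; exact ⟨h1, h2, h3, v2 u h1 h2 h3⟩
            · right; right; right; exact ⟨h1, h2, h3, v3 u h1 h2 h3⟩
      refine ⟨r', ?_, ?_, ?_⟩
      · intro u hu v hv huv
        have a1 := vv u
        have a2 := vv v
        have b1 := hM u
        have b2 := hM v
        by_cases hus : u = s
        · by_cases hvs : v = s
          · rw [hus, hvs]
          · exfalso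
            rw [hus, v0] at huv
            rcases a2 with h | h | h | h
            · exact hvs h.1
            all_goals omega
        · by_cases hvs : v = s
          · exfalso
            rw [hvs, v0] at huv
            rcases a1 with h | h | h | h
            · exact hus h.1
            all_goals omega
          · apply r1 u ⟨hu, hus⟩ v ⟨hv, hvs⟩
            rcases a1 with h | h | h | h
            · exact absurd h.1 hus
            all_goals
              rcases a2 with h' | h' | h' | h'
              · exact absurd h'.1 hvs
              all_goals omega
      · intro u hu v hv w hw huw hvw hru hrv huv
        by_cases hwN : w = s ∨ w ∈ N
        · have hle : ∀ z ∈ T, r' z < r' w → z = s ∨ z ∈ N := by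
            intro z hz hzw
            by_contra hcon
            push Not at hcon
            have a1 := v3 z hcon.1 (fun h => hcon.2 (hCN z h hcon.1)) hcon.2
            have a2 := vv w
            have b2 := hM w
            rcases a2 with h | h | h | h
            · omega
            · omega
            · omega
            · rcases hwN with h1 | h1
              · exact h.1 h1
              · exact h.2.2.1 h1
          rcases hle u hu hru with h1 | h1 <;> rcases hle v hv hrv with h2 | h2
          · exact absurd (h1.trans h2.symm) huv
          · rw [h1]; exact adj_symm _ h2.2
          · rw [h2]; exact h1.2
          · exact hmor u hu v hv s hs (hin u hu h1.2) (hin v hv h2.2) huv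
        · push Not at hwN
          have hws : w ∈ T \ {s} := ⟨hw, hwN.1⟩
          have hlt : ∀ z ∈ T, D.Adj z w → r' z < r' w → z ∈ T \ {s} ∧ r z < r w := by
            intro z hz hzw hr
            have hzs : z ≠ s := by
              rintro rfl
              exact hwN.2 ⟨hws, adj_symm _ hzw⟩
            refine ⟨⟨hz, hzs⟩, ?_⟩
            by_cases hzN : z ∈ N
            · exact r3 z hzN w hws hwN.2
            · have a1 := v3 z hzs (fun h => hzN (hCN z h hzs)) hzN
              have a2 := v3 w hwN.1 (fun h => hwN.2 (hCN w h hwN.1)) hwN.2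
              omega
          obtain ⟨p1, p2⟩ := hlt u hu huw hru
          obtain ⟨q1, q2⟩ := hlt v hv hvw hrv
          exact r2 u p1 v q1 w hws huw hvw p2 q2 huv
      · intro u hu v hv hvC
        have b1 := hM u
        have hvs : v ≠ s := by rintro rfl; exact hvC hsC
        have a1 : r' u < 1 + M := by
          rcases vv u with h | h | h | h
          · omega
          · omega
          · exact absurd hu h.2.1
          · exact absurd hu h.2.1
        rcases vv v with h | h | h | h
        · exact absurd h.1 hvs
        · exact absurd h.2.1 hvC
        · omega
        · omega
    · obtain ⟨r, r1, r2, r3⟩ := ih (T \ {s}) hT' hmor' C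
        (fun u hu => ⟨hC hu, by rintro rfl; exact hsC hu⟩) hcl
      obtain ⟨M, hM⟩ := exists_bound r
      let r' : V → ℕ := fun u => if u = s then M else r u
      have v0 : r' s = M := by simp [r']
      have v1 : ∀ u, u ≠ s → r' u = r u := fun u h1 => by simp [r', h1]
      refine ⟨r', ?_, ?_, ?_⟩
      · intro u hu v hv huv
        by_cases hus : u = s <;> by_cases hvs : v = s
        · rw [hus, hvs]
        · rw [hus, v0, v1 v hvs] at huv
          have := hM v; omega
        · rw [hvs, v0, v1 u hus] at huv
          have := hM u; omega
        · rw [v1 u hus, v1 v hvs] at huv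
          exact r1 u ⟨hu, hus⟩ v ⟨hv, hvs⟩ huv
      · intro u hu v hv w hw huw hvw hru hrv huv
        by_cases hws : w = s
        · subst hws
          exact hmor u hu v hv w hs (hin u hu huw) (hin v hv hvw) huv
        · have key : ∀ z, r' z < r' w → z ≠ s ∧ r z < r w := by
            intro z hz
            rw [v1 w hws] at hz
            have hzs : z ≠ s := by
              rintro rfl
              rw [v0] at hz
              have := hM w; omega
            rw [v1 z hzs] at hz
            exact ⟨hzs, hz⟩
          exact r2 u ⟨hu, (key u hru).1⟩ v ⟨hv, (key v hrv).1⟩ w ⟨hw, hws⟩ huw hvw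
            (key u hru).2 (key v hrv).2 huv
      · intro u hu v hv hvC
        have hus : u ≠ s := by rintro rfl; exact hsC hu
        by_cases hvs : v = s
        · rw [hvs, v0, v1 u hus]; exact hM u
        · rw [v1 u hus, v1 v hvs]
          exact r3 u hu v ⟨hv, hvs⟩ hvC

/-! ### Re-rooting -/

theorem reroot [Finite V] {D D2 : Dag V} (hV : VEq D D2) {a b c : V}
    (hK : ∀ k, D.edge k c → D2.edge k c) (hcb : D.edge c b) (hbc : D2.edge b c)
    (hca : D.edge c a) (hab : D.edge a b) : ∃ D3, VEq D D3 ∧ D3.edge b a := by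
  obtain ⟨ρ, hρ⟩ := exists_rank D
  have vs1 : ∀ {u v w}, u ≠ w → ¬ D.Adj u w → D.edge u v → D.edge w v →
      D2.edge u v ∧ D2.edge w v := fun h1 h2 h3 h4 => (hV.2 _ _ _ h1 h2).1 ⟨h3, h4⟩
  have vs2 : ∀ {u v w}, u ≠ w → ¬ D.Adj u w → D2.edge u v → D2.edge w v →
      D.edge u v ∧ D.edge w v := fun h1 h2 h3 h4 => (hV.2 _ _ _ h1 h2).2 ⟨h3, h4⟩
  have cyc3 : ∀ {u v w}, D2.edge u v → D2.edge v w → ¬ D2.edge w u := fun h1 h2 h3 =>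
    D2.acyclic _ _ h3 (Relation.ReflTransGen.tail (Relation.ReflTransGen.single h1) h2)
  -- orientation from rank
  have ori : ∀ {u v}, D.Adj u v → ρ u < ρ v → D.edge u v := by
    intro u v h1 h2
    rcases h1 with h1 | h1
    · exact h1
    · have := hρ _ _ h1; omega
  have adj2 : ∀ {u v}, D.edge u v → ¬ D2.edge u v → D2.edge v u := fun h1 h2 =>
    ((hV.1 _ _).1 (Or.inl h1)).resolve_left h2
  let T : Set V := {v | D.Anc v b ∧ ¬ D.Anc v c}
  have hbT : b ∈ T := ⟨Relation.ReflTransGen.refl, D.acyclic _ _ hcb⟩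
  have haT : a ∈ T := ⟨Relation.ReflTransGen.single hab, D.acyclic _ _ hca⟩
  have claim : ∀ n v, ρ b - ρ v = n → v ∈ T →
      D.edge c v ∧ (D2.edge v c ∨ ∃ z ∈ T, D.edge v z ∧ D2.edge z v) := by
    intro n
    induction n using Nat.strong_induction_on with
    | _ n ih =>
    intro v hn hv
    by_cases hvb : v = b
    · subst hvb; exact ⟨hcb, Or.inl hbc⟩
    · have hchild : ({w | w ∈ T ∧ D.edge v w}).Nonempty := by
        rcases Relation.ReflTransGen.cases_head hv.1 with h | ⟨w, h1, h2⟩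
        · exact absurd h hvb
        · exact ⟨w, ⟨h2, fun h => hv.2 (Relation.ReflTransGen.head h1 h)⟩, h1⟩
      obtain ⟨v1, ⟨hv1, hvv1⟩, hmax⟩ := Set.exists_max_image _ ρ (Set.toFinite _) hchild
      have hlt := hρ _ _ hvv1
      have hle := rank_anc hρ hv1.1
      obtain ⟨i1, i2⟩ := ih (ρ b - ρ v1) (by omega) v1 rfl hv1
      have hz : ∀ z ∈ T, D.edge v1 z → v ≠ z ∧ ¬ D.Adj v z := by
        intro z hzT h1
        have h2 := hρ _ _ h1
        refine ⟨fun h => by rw [h] at hlt; omega, fun h => ?_⟩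
        have := hmax z ⟨hzT, ori h (by omega)⟩
        omega
      have hcv : D.edge c v := by
        by_cases hadj : D.Adj c v
        · rcases hadj with h | h
          · exact h
          · exact absurd (Relation.ReflTransGen.single h) hv.2
        · have hne : c ≠ v := by rintro rfl; exact hv.2 Relation.ReflTransGen.refl
          obtain ⟨e1, e2⟩ := vs1 hne hadj i1 hvv1
          rcases i2 with h | ⟨z, hzT, h1, h2⟩
          · exact absurd h (edge_asymm _ e1)
          · obtain ⟨n1, n2⟩ := hz z hzT h1
            exact absurd (vs2 n1 n2 e2 h2).2 (edge_asymm _ h1)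
      refine ⟨hcv, ?_⟩
      by_cases hcv2 : D2.edge c v
      · right
        refine ⟨v1, hv1, hvv1, ?_⟩
        apply adj2 hvv1
        intro e2
        rcases i2 with h | ⟨z, hzT, h1, h2⟩
        · exact cyc3 e2 h hcv2
        · obtain ⟨n1, n2⟩ := hz z hzT h1
          exact absurd (vs2 n1 n2 e2 h2).2 (edge_asymm _ h1)
      · left; exact adj2 hcv hcv2
  have cl : ∀ v ∈ T, D.edge c v ∧ (D2.edge v c ∨ ∃ z ∈ T, D.edge v z ∧ D2.edge z v) :=
    fun v => claim _ v rfl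
  -- downward induction principle
  have dind : ∀ P : V → Prop, (∀ v ∈ T, (∀ z ∈ T, D.edge v z → P z) → P v) → ∀ v ∈ T, P v := by
    intro P hP
    have : ∀ n v, ρ b - ρ v = n → v ∈ T → P v := by
      intro n
      induction n using Nat.strong_induction_on with
      | _ n ih =>
      intro v hn hv
      apply hP v hv
      intro z hz h1
      have h2 := hρ _ _ h1
      have h3 := rank_anc hρ hz.1
      exact ih (ρ b - ρ z) (by omega) z rfl hz
    exact fun v => this _ v rfl
  have moral : ∀ u ∈ T, ∀ v ∈ T, ∀ w ∈ T, D.edge u w → D.edge v w → u ≠ v → D.Adj u v := by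
    intro u hu v hv w hw
    refine dind (fun w => D.edge u w → D.edge v w → u ≠ v → D.Adj u v) ?_ w hw
    intro w hw ih h1 h2 hne
    by_contra hadj
    obtain ⟨e1, e2⟩ := vs1 hne hadj h1 h2
    rcases (cl w hw).2 with h | ⟨z, hz, h3, h4⟩
    · have f1 := adj2 (cl u hu).1 (fun h' => cyc3 e1 h h')
      have f2 := adj2 (cl v hv).1 (fun h' => cyc3 e2 h h')
      exact edge_asymm _ (vs2 hne hadj f1 f2).1 (cl u hu).1
    · have key : ∀ q, D.edge q w → D2.edge q w → D.edge q z := by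
        intro q g1 g2
        have r1 := hρ _ _ g1
        have r2 := hρ _ _ h3
        by_cases ha : D.Adj q z
        · exact ori ha (by omega)
        · exact absurd (vs2 (fun h => by rw [h] at r1; omega) ha g2 h4).2 (edge_asymm _ h3)
      exact hadj (ih z hz h3 (key u h1 e1) (key v h2 e2) hne)
  have wcl : ∀ w, D.Anc w c → w ≠ c → ∀ v ∈ T, D.edge w v → D.edge w c := by
    intro w hw hwc
    refine dind (fun v => D.edge w v → D.edge w c) ?_
    intro v hv ih h1
    by_cases hadj : D.Adj w c
    · rcases hadj with h | h
      · exact h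
      · exact absurd hw (D.acyclic _ _ h)
    · obtain ⟨e1, e2⟩ := vs1 hwc hadj h1 (cl v hv).1
      rcases (cl v hv).2 with h | ⟨z, hz, h3, h4⟩
      · exact absurd h (edge_asymm _ e2)
      · apply ih z hz h3
        have r1 := hρ _ _ h1
        have r2 := hρ _ _ h3
        by_cases ha : D.Adj w z
        · exact ori ha (by omega)
        · exact absurd (vs2 (fun h => by rw [h] at r1; omega) ha e1 h4).2 (edge_asymm _ h3)
  have kt : ∀ k, D.edge k c → ∀ t ∈ T, D.Adj k t := by
    intro k hk
    refine dind (fun t => D.Adj k t) ?_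
    intro t ht ih
    by_contra hadj
    have hne : k ≠ t := by
      rintro rfl
      exact ht.2 (Relation.ReflTransGen.single hk)
    rcases (cl t ht).2 with h | ⟨z, hz, h3, h4⟩
    · exact edge_asymm _ (vs2 hne hadj (hK k hk) h).2 (cl t ht).1
    · have r1 := hρ _ _ hk
      have r2 := hρ _ _ (cl z hz).1
      have := ori (ih z hz h3) (by omega)
      exact edge_asymm _ (vs1 hne hadj this h3).2 h4
  have parT : ∀ w v, v ∈ T → D.edge w v → w ∉ T → D.Anc w c := by
    intro w v hv h1 h2
    by_contra h3
    exact h2 ⟨Relation.ReflTransGen.head h1 hv.1, h3⟩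
  have outT : ∀ w v u, v ∈ T → u ∈ T → w ∉ T → D.edge w v → D.Adj w u := by
    intro w v u hv hu hw h1
    by_cases hwc : w = c
    · subst hwc; exact Or.inl (cl u hu).1
    · exact kt w (wcl w (parT w v hv h1 hw) hwc v hv h1) u hu
  obtain ⟨r, r1, r2, r3⟩ := peo D _ T rfl moral {b} (by simpa using hbT) (by
    intro u hu v hv huv
    exact absurd ((Set.mem_singleton_iff.1 hu).trans (Set.mem_singleton_iff.1 hv).symm) huv)
  let E3 : V → V → Prop := fun u v =>
    (u ∈ T ∧ v ∈ T ∧ D.Adj u v ∧ r u < r v) ∨ (¬ (u ∈ T ∧ v ∈ T) ∧ D.edge u v)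
  have E3T : ∀ u v, u ∈ T → v ∈ T → (E3 u v ↔ D.Adj u v ∧ r u < r v) := by
    intro u v hu hv; simp [E3, hu, hv]
  have E3n : ∀ u v, ¬ (u ∈ T ∧ v ∈ T) → (E3 u v ↔ D.edge u v) := by
    intro u v h
    constructor
    · rintro (h1 | h1)
      · exact absurd ⟨h1.1, h1.2.1⟩ h
      · exact h1.2
    · intro h1; exact Or.inr ⟨h, h1⟩
  let D3 : Dag V := ofRank E3 (fun v => if D.Anc v c then 0 else if v ∈ T then 1 else 2)
    (fun v => if v ∈ T then r v else ρ v) (by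
      intro u v h
      by_cases huv : u ∈ T ∧ v ∈ T
      · have h1 := (E3T u v huv.1 huv.2).1 h
        right
        simp [huv.1, huv.2, huv.1.2, huv.2.2, h1.2]
      · have h1 := (E3n u v huv).1 h
        have h2 := hρ _ _ h1
        by_cases hvB : D.Anc v c
        · have huB : D.Anc u c := Relation.ReflTransGen.head h1 hvB
          have hvT : v ∉ T := fun h => h.2 hvB
          have huT : u ∉ T := fun h => h.2 huB
          right; simp [hvB, huB, hvT, huT, h2]
        · by_cases hvT : v ∈ T
          · have huT : u ∉ T := fun h => huv ⟨h, hvT⟩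
            have huB := parT u v hvT h1 huT
            left; simp [hvB, huB, hvT]
          · by_cases huB : D.Anc u c
            · left; simp [hvB, huB, hvT]
            · by_cases huT : u ∈ T
              · left; simp [hvB, huB, hvT, huT]
              · right; simp [hvB, huB, hvT, huT, h2])
  have hD3 : D3.edge = E3 := rfl
  have hadj3 : ∀ u v, D.Adj u v ↔ D3.Adj u v := by
    intro u v
    unfold Dag.Adj
    rw [hD3]
    by_cases huv : u ∈ T ∧ v ∈ T
    · rw [E3T u v huv.1 huv.2, E3T v u huv.2 huv.1]
      constructor
      · intro h
        have hne : r u ≠ r v := fun h' => adj_ne D h (r1 u huv.1 v huv.2 h')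
        rcases lt_or_gt_of_ne hne with h' | h'
        · exact Or.inl ⟨h, h'⟩
        · exact Or.inr ⟨adj_symm _ h, h'⟩
      · rintro (h | h)
        · exact h.1
        · exact adj_symm _ h.1
    · rw [E3n u v huv, E3n v u (fun h => huv h.symm)]
  refine ⟨D3, ⟨hadj3, ?_⟩, ?_⟩
  · intro u v w hne hadj
    rw [hD3]
    by_cases hv : v ∈ T
    · by_cases hu : u ∈ T <;> by_cases hw : w ∈ T
      · rw [E3T u v hu hv, E3T w v hw hv]
        constructor
        · intro h
          exact absurd (moral u hu w hw v hv h.1 h.2 hne) hadj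
        · intro h
          exact absurd (r2 u hu w hw v hv h.1.1 h.2.1 h.1.2 h.2.2 hne) hadj
      · rw [E3n w v (fun h => hw h.1)]
        constructor
        · intro h
          exact absurd (adj_symm _ (outT w v u hv hu hw h.2)) hadj
        · intro h
          exact absurd (adj_symm _ (outT w v u hv hu hw h.2)) hadj
      · rw [E3n u v (fun h => hu h.1)]
        constructor
        · intro h
          exact absurd (outT u v w hv hw hu h.1) hadj
        · intro h
          exact absurd (outT u v w hv hw hu h.1) hadj
      · rw [E3n w v (fun h => hw h.1), E3n u v (fun h => hu h.1)]
    · rw [E3n w v (fun h => hv h.2), E3n u v (fun h => hv h.2)]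
  · rw [hD3, E3T b a hbT haT]
    refine ⟨Or.inr hab, r3 b rfl a haT ?_⟩
    rintro h
    rw [Set.mem_singleton_iff.1 h] at hab
    exact edge_irrefl D _ hab


theorem cp_transfer {D D0 : Dag V} (h : D.MEquiv D0) {a b : V} :
    D.CpDir a b ↔ D0.CpDir a b :=
  ⟨fun H D' h' => H D' (mequiv_trans h h'),
   fun H D' h' => H D' (mequiv_trans (mequiv_symm h) h')⟩

theorem min_parents [Finite V] (c : V) : ∀ (n : ℕ) (D : Dag V), {u | D.Anc u c}.ncard = n →
    ∃ D0, D.MEquiv D0 ∧ ∀ k, D0.edge k c → D.CpDir k c := by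
  intro n
  induction n using Nat.strong_induction_on with
  | _ n ih =>
  intro D hn
  by_cases hall : ∀ k, D.edge k c → D.CpDir k c
  · exact ⟨D, fun _ _ _ => Iff.rfl, hall⟩
  push Not at hall
  obtain ⟨t, htc, hncp⟩ := hall
  unfold Dag.CpDir at hncp
  push Not at hncp
  obtain ⟨D', hD', hnt⟩ := hncp
  have hV := mequiv_veq hD'
  have hct : D'.edge c t := by
    rcases (hV.1 t c).1 (Or.inl htc) with h | h
    · exact absurd h hnt
    · exact h
  obtain ⟨ρ, hρ⟩ := exists_rank D
  obtain ⟨ρ', hρ'⟩ := exists_rank D'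
  set A : Set V := {u | D.Anc u c} with hA
  have Aup : ∀ u v, D.edge u v → v ∈ A → u ∈ A := fun u v e hv =>
    Relation.ReflTransGen.head e hv
  let E : V → V → Prop := fun u v => if u ∈ A ∧ v ∈ A then D'.edge u v else D.edge u v
  have EA : ∀ u v, u ∈ A → v ∈ A → (E u v ↔ D'.edge u v) := by
    intro u v hu hv
    simp only [E, hu, hv, and_self, if_true]
  have En : ∀ u v, v ∉ A → (E u v ↔ D.edge u v) := by
    intro u v hv
    simp only [E, hv, and_false, if_false]
  have En' : ∀ u v, u ∉ A → (E u v ↔ D.edge u v) := by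
    intro u v hv
    simp only [E, hv, false_and, if_false]
  have Eup : ∀ u v, E u v → v ∈ A → u ∈ A := by
    intro u v e hv
    by_contra hu
    exact hu (Aup u v ((En' u v hu).1 e) hv)
  let D3 : Dag V := ofRank E (fun u => if u ∈ A then 0 else 1)
    (fun u => if u ∈ A then ρ' u else ρ u) (by
      intro u v e
      by_cases hv : v ∈ A
      · have hu := Eup u v e hv
        right
        simp only [hu, hv, if_true, true_and]
        exact hρ' u v ((EA u v hu hv).1 e)
      · by_cases hu : u ∈ A
        · left; simp [hu, hv]
        · right
          simp only [hu, hv, if_false, true_and]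
          exact hρ u v ((En u v hv).1 e))
  have hD3 : D3.edge = E := rfl
  have hVE : VEq D D3 := by
    constructor
    · intro u v
      unfold Dag.Adj
      rw [hD3]
      by_cases hu : u ∈ A <;> by_cases hv : v ∈ A
      · rw [EA u v hu hv, EA v u hv hu]; exact hV.1 u v
      · rw [En u v hv, En' v u hv]
      · rw [En' u v hu, En v u hu]
      · rw [En u v hv, En' v u hv]
    · intro u v w hne hadj
      rw [hD3]
      by_cases hv : v ∈ A
      · have h1 := hV.2 u v w hne hadj
        constructor
        · intro h
          have hu := Aup _ _ h.1 hv
          have hw := Aup _ _ h.2 hv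
          rw [EA u v hu hv, EA w v hw hv]
          exact h1.1 h
        · intro h
          have hu := Eup _ _ h.1 hv
          have hw := Eup _ _ h.2 hv
          rw [EA u v hu hv, EA w v hw hv] at h
          exact h1.2 h
      · rw [En u v hv, En w v hv]
  have hM : D.MEquiv D3 := (mequiv_iff_veq D D3).2 hVE
  have hcA : c ∈ A := Relation.ReflTransGen.refl
  have key : ∀ u, D3.Anc u c → u ∈ A ∧ D'.Anc u c := by
    intro u hu
    induction hu using Relation.ReflTransGen.head_induction_on with
    | refl => exact ⟨hcA, Relation.ReflTransGen.refl⟩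
    | head e _ ih =>
      have hx := Eup _ _ e ih.1
      exact ⟨hx, Relation.ReflTransGen.head ((EA _ _ hx ih.1).1 e) ih.2⟩
  have hlt : {u | D3.Anc u c}.ncard < n := by
    rw [← hn]
    apply Set.ncard_lt_ncard _ (Set.toFinite _)
    refine ⟨fun u hu => (key u hu).1, fun hsub => ?_⟩
    have : D3.Anc t c := hsub (show t ∈ A from Relation.ReflTransGen.single htc)
    exact D'.acyclic c t hct (key t this).2
  obtain ⟨D0, h0, h1⟩ := ih _ hlt D3 rfl
  exact ⟨D0, mequiv_trans hM h0, fun k hk => (cp_transfer hM).2 (h1 k hk)⟩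

theorem not_cp {D : Dag V} {a b : V} (h : ¬ D.CpDir a b) :
    ∃ D', D.MEquiv D' ∧ ¬ D'.edge a b := by
  unfold Dag.CpDir at h
  push Not at h
  exact h

theorem no_flag [Finite V] {D : Dag V} {a b c : V} (hab : D.CpDir a b) (hca : D.Adj c a)
    (nac : ¬ D.CpDir a c) (hcb : D.Adj c b) (nbc : ¬ D.CpDir b c) (ncb : ¬ D.CpDir c b) :
    False := by
  obtain ⟨D0, hM, hK⟩ := min_parents c _ D rfl
  have hV := mequiv_veq hM
  have e1 : D0.edge c a := by
    rcases (hV.1 c a).1 hca with h | h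
    · exact h
    · exact absurd (hK a h) nac
  have e2 : D0.edge c b := by
    rcases (hV.1 c b).1 hcb with h | h
    · exact h
    · exact absurd (hK b h) nbc
  obtain ⟨D2, hM2, h2⟩ := not_cp ncb
  have e3 : D2.edge b c := by
    rcases ((mequiv_veq hM2).1 c b).1 hcb with h | h
    · exact absurd h h2
    · exact h
  obtain ⟨D3, hV3, e4⟩ := reroot (veq_trans (veq_symm hV) (mequiv_veq hM2))
    (fun k hk => hK k hk D2 hM2) e2 e3 e1 (hab D0 hM)
  have := hab D3 (mequiv_trans hM ((mequiv_iff_veq _ _).2 hV3))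
  exact edge_asymm _ this e4

theorem cp_trans [Finite V] {D : Dag V} {a b c : V} (hab : D.CpDir a b) (hbc : D.CpDir b c)
    (hac : D.Adj a c) : D.CpDir a c := by
  intro D' hM
  rcases ((mequiv_veq hM).1 a c).1 hac with h | h
  · exact h
  · exact absurd (Relation.ReflTransGen.head (hbc D' hM) (Relation.ReflTransGen.single h))
      (D'.acyclic a b (hab D' hM))

theorem no_back [Finite V] {D : Dag V} {a b c : V} (hab : D.Adj a b) (hbc : D.Adj b c)
    (nba : ¬ D.CpDir b a) (ncb : ¬ D.CpDir c b) (hca : D.CpDir c a) : False := by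
  by_cases h1 : D.CpDir a b
  · exact ncb (cp_trans hca h1 (adj_symm _ hbc))
  exact no_flag hca hbc ncb (adj_symm _ hab) h1 nba

/-- Possibly directed walks. -/
def PW (D : Dag V) (X Y : V) (n : ℕ) (f : ℕ → V) : Prop :=
  f 0 = X ∧ f n = Y ∧ ∀ i, i < n → D.Adj (f i) (f (i+1)) ∧ ¬ D.CpDir (f (i+1)) (f i)

theorem poss_pw {D : Dag V} {X Y : V} (h : D.PossAn X Y) : ∃ n f, PW D X Y n f := by
  obtain ⟨p, hp⟩ := h
  refine ⟨p.n, fun i => if h : i < p.n + 1 then p.f ⟨i, h⟩ else X, ?_, ?_, ?_⟩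
  · simpa using p.first
  · simpa using p.last
  · intro i hi
    have h1 : i < p.n + 1 := by omega
    have h2 : i + 1 < p.n + 1 := by omega
    simp only [h1, h2, dif_pos]
    exact ⟨p.adj ⟨i, hi⟩, hp ⟨i, hi⟩⟩

theorem shortcut {D : Dag V} {X Y : V} {n : ℕ} {f : ℕ → V} (h : PW D X Y n f) (i d : ℕ)
    (hi : i + 1 + d ≤ n) (ha : D.Adj (f i) (f (i+1+d))) (hc : ¬ D.CpDir (f (i+1+d)) (f i)) :
    PW D X Y (n - d) (fun k => if k ≤ i then f k else f (k+d)) := by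
  obtain ⟨h0, hn, hs⟩ := h
  refine ⟨by simpa using h0, ?_, ?_⟩
  · have : ¬ (n - d ≤ i) := by omega
    simp only [this, if_false]
    rw [← hn]; congr 1; omega
  · intro k hk
    by_cases h1 : k + 1 ≤ i
    · have h2 : k ≤ i := by omega
      simp only [h1, h2, if_true]
      exact hs k (by omega)
    · by_cases h2 : k ≤ i
      · have h3 : k = i := by omega
        subst h3
        simp only [h1, h2, if_true, if_false]
        exact ⟨ha, hc⟩
      · simp only [h1, h2, if_false]
        have := hs (k + d) (by omega)
        rw [show k + 1 + d = k + d + 1 by omega]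
        exact this

theorem exists_unshielded [Finite V] {D : Dag V} {X Y : V} (h : D.PossAn X Y) :
    ∃ n f, PW D X Y n f ∧ ∀ i, i + 2 ≤ n → f i ≠ f (i+2) ∧ ¬ D.Adj (f i) (f (i+2)) := by
  have hex := poss_pw h
  obtain ⟨f, hf⟩ := Nat.find_spec hex
  have hmin : ∀ m g, PW D X Y m g → Nat.find hex ≤ m := fun m g hg => Nat.find_min' hex ⟨g, hg⟩
  generalize Nat.find hex = n at hf hmin
  refine ⟨n, f, hf, fun i hi => ⟨fun heq => ?_, fun hadj => ?_⟩⟩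
  · rcases Nat.lt_or_ge (i+2) n with h2 | h2
    · have hs := hf.2.2 (i+2) h2
      rw [← heq] at hs
      have := hmin _ _ (shortcut hf i 2 (by omega) hs.1 hs.2)
      omega
    · have h3 : n = i + 2 := by omega
      have : PW D X Y i f := ⟨hf.1, by rw [heq, ← h3]; exact hf.2.1,
        fun j hj => hf.2.2 j (by omega)⟩
      have := hmin _ _ this
      omega
  · have s1 := hf.2.2 i (by omega)
    have s2 := hf.2.2 (i+1) (by omega)
    by_cases hc : D.CpDir (f (i+2)) (f i)
    · exact no_back s1.1 s2.1 s1.2 s2.2 hc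
    · have := hmin _ _ (shortcut hf i 1 (by omega) hadj hc)
      omega

/-- In a member of the class where the first edge points forward, all edges do. -/
theorem all_forward [Finite V] {D : Dag V} {X Y : V} {n : ℕ} {f : ℕ → V} (hf : PW D X Y n f)
    (hu : ∀ i, i + 2 ≤ n → f i ≠ f (i+2) ∧ ¬ D.Adj (f i) (f (i+2)))
    {D1 : Dag V} (hM : D.MEquiv D1) (h0 : D1.edge (f 0) (f 1)) :
    ∀ i, i < n → D1.edge (f i) (f (i+1)) := by
  intro i
  induction i with
  | zero => intro _; exact h0
  | succ i ih =>
    intro hi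
    have e := ih (by omega)
    have s := hf.2.2 (i+1) hi
    rcases ((mequiv_veq hM).1 _ _).1 s.1 with h | h
    · exact h
    · exfalso
      apply s.2
      intro D' hM'
      have hV : VEq D1 D' := veq_trans (veq_symm (mequiv_veq hM)) (mequiv_veq hM')
      have hna : ¬ D1.Adj (f i) (f (i+2)) := fun h' =>
        (hu i (by omega)).2 (((mequiv_veq hM).1 _ _).2 h')
      exact ((hV.2 (f i) (f (i+1)) (f (i+2)) (hu i (by omega)).1 hna).1 ⟨e, h⟩).2

theorem fwd_anc {D1 : Dag V} {n : ℕ} {f : ℕ → V}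
    (h : ∀ i, i < n → D1.edge (f i) (f (i+1))) (i : ℕ) : ∀ d, i + d ≤ n →
    D1.Anc (f i) (f (i+d)) := by
  intro d
  induction d with
  | zero => intro _; exact Relation.ReflTransGen.refl
  | succ d ih =>
    intro hd
    exact Relation.ReflTransGen.tail (ih (by omega)) (h (i+d) (by omega))

theorem fwd_ne {D1 : Dag V} {n : ℕ} {f : ℕ → V}
    (h : ∀ i, i < n → D1.edge (f i) (f (i+1))) {i j : ℕ} (hij : i < j) (hj : j ≤ n) :
    f i ≠ f j := by
  intro he
  have h1 := fwd_anc h (i+1) (j - (i+1)) (by omega)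
  rw [show i + 1 + (j - (i+1)) = j by omega, ← he] at h1
  exact D1.acyclic _ _ (h i (by omega)) h1

theorem main [Finite V] (D : Dag V) (X Y : V) (hXY : X ≠ Y)
    (hposs : D.PossAn X Y) (hnexpl : ¬ D.ExplAn X Y) (S : Set V)
    (hS : ∀ D' : Dag V, D.MEquiv D' → D'.ValidAdjustment X Y S) : False := by
  obtain ⟨n, f, hf, hu⟩ := exists_unshielded hposs
  have hn : 0 < n := by
    rcases Nat.eq_zero_or_pos n with h | h
    · subst h; exact absurd (hf.1.symm.trans hf.2.1) hXY
    · exact h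
  have s0 := hf.2.2 0 hn
  obtain ⟨D1, hM1, hne1⟩ := not_cp s0.2
  have e1 : D1.edge (f 0) (f 1) := by
    rcases ((mequiv_veq hM1).1 _ _).1 s0.1 with h | h
    · exact h
    · exact absurd h hne1
  have fw := all_forward hf hu hM1 e1
  have inj : ∀ i j, i ≤ n → j ≤ n → f i = f j → i = j := by
    intro i j hi hj he
    rcases Nat.lt_trichotomy i j with h | h | h
    · exact absurd he (fwd_ne fw h hj)
    · exact h
    · exact absurd he.symm (fwd_ne fw h hi)
  by_cases hc : D.CpDir (f 0) (f 1)
  · refine hnexpl ⟨⟨n, fun i => f i, ?_, hf.1, hf.2.1, ?_⟩, ?_⟩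
    · intro i j he
      exact Fin.ext (inj i j (by omega) (by omega) he)
    · intro i
      exact (hf.2.2 i i.2).1
    · intro i D' hM'
      exact all_forward hf hu hM' (hc D' hM') i i.2
  obtain ⟨D2, hM2, hne2⟩ := not_cp hc
  have hnS : ∀ i, 0 < i → i ≤ n → f i ∉ S := by
    intro i h0 hi hs
    have a1 := fwd_anc fw 0 i (by omega)
    have a2 := fwd_anc fw i (n - i) (by omega)
    rw [hf.1, Nat.zero_add] at a1
    rw [show i + (n - i) = n by omega, hf.2.1] at a2
    refine (hS D1 hM1).1 _ hs (f i) ?_ a1 a2 Relation.ReflTransGen.refl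
    rw [← hf.1]
    exact fun h => fwd_ne fw h0 hi h.symm
  let p : GPath D2.Adj X Y := ⟨n, fun i => f i, fun i j he =>
      Fin.ext (inj i j (by omega) (by omega) he), hf.1, hf.2.1,
      fun i => ((mequiv_veq hM2).1 _ _).1 (hf.2.2 i i.2).1⟩
  obtain ⟨i, hi0, hin, hb⟩ := (hS D2 hM2).2 p (fun hd => hne2 (hd ⟨0, hn⟩))
  change i < n at hin
  rcases hb with ⟨_, hs⟩ | ⟨⟨_, _, c1, c2⟩, _⟩
  · exact hnS i hi0 hin.le hs
  · change D2.edge (f (i-1)) (f i) at c1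
    change D2.edge (f (i+1)) (f i) at c2
    obtain ⟨j, rfl⟩ : ∃ j, i = j + 1 := ⟨i - 1, by omega⟩
    rw [Nat.add_sub_cancel] at c1
    have hV : VEq D2 D1 := veq_trans (veq_symm (mequiv_veq hM2)) (mequiv_veq hM1)
    have hna : ¬ D2.Adj (f j) (f (j+2)) := fun h' =>
      (hu j (by omega)).2 (((mequiv_veq hM2).1 _ _).2 h')
    have := ((hV.2 (f j) (f (j+1)) (f (j+2)) (hu j (by omega)).1 hna).1 ⟨c1, c2⟩).2
    exact edge_asymm _ (fw (j+1) hin) this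

end NCVA
/-- If `X` is a possible but not an explicit ancestor of `Y` in the CPDAG
`G` of the MEC of a DAG on a finite node set, then no set `S ⊆ V ∖ {X, Y}` is a valid
adjustment set for `(X, Y)` in every DAG of the MEC represented by `G`. -/
theorem no_common_valid_adjustment_of_possAn_not_explAn
    {V : Type*} [Fintype V] (D : Dag V) (X Y : V) (hXY : X ≠ Y)
    (hposs : D.PossAn X Y) (hnexpl : ¬ D.ExplAn X Y) :
    ¬ ∃ S : Set V, X ∉ S ∧ Y ∉ S ∧
        ∀ D' : Dag V, D.MEquiv D' → D'.ValidAdjustment X Y S := by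
  rintro ⟨S, _, _, hS⟩
  exact NCVA.main D X Y hXY hposs hnexpl S hS
end

section
/- Let G be the CPDAG of the Markov equivalence class of a DAG, and let X, Y be distinct nodes such that X is a possible ancestor of Y in G. Then G is amenable relative to (X, Y) if and only if for every V ∈ Sib_G(X), the set Pa_G(V) ∪ {X} d-separates V and Y in every DAG of the Markov equivalence class represented by G. -/
variable {V : Type*}

namespace Dag

theorem rtg_mono {W : Type*} {R Q : W → W → Prop} (h : ∀ a b, R a b → Q a b) {a b : W}
    (hab : Relation.ReflTransGen R a b) : Relation.ReflTransGen Q a b := by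
  induction hab with
  | refl => exact .refl
  | tail _ h2 ih => exact ih.tail (h _ _ h2)

/-- Collider at position `i` of a walk. -/
def Coll (D : Dag V) (g : ℕ → V) (i : ℕ) : Prop :=
  D.edge (g (i - 1)) (g i) ∧ D.edge (g (i + 1)) (g i)

/-- Active walk of length `n`. -/
def AW (D : Dag V) (S : Set V) (n : ℕ) (g : ℕ → V) : Prop :=
  (∀ i, i < n → D.Adj (g i) (g (i + 1))) ∧
  (∀ i, 0 < i → i < n →
    (¬ D.Coll g i → g i ∉ S) ∧ (D.Coll g i → ∃ d, D.Anc (g i) d ∧ d ∈ S))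

theorem Adj.symm' {D : Dag V} {a b : V} (h : D.Adj a b) : D.Adj b a := Or.symm h

theorem edge_irrefl (D : Dag V) (a : V) : ¬ D.edge a a := fun h =>
  D.acyclic a a h .refl

theorem edge_asymm (D : Dag V) {a b : V} (h : D.edge a b) : ¬ D.edge b a := fun h' =>
  D.acyclic a b h (.single h')

theorem not_dSep_of_path (D : Dag V) {x y : V} {S : Set V} (n : ℕ) (g : ℕ → V)
    (h0 : g 0 = x) (hn : g n = y) (hinj : ∀ i j, i ≤ n → j ≤ n → g i = g j → i = j)
    (hA : D.AW S n g) : ¬ D.dSep x y S := by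
  intro h
  obtain ⟨i, h1, h2, h3⟩ := h
    { n := n
      f := fun i => g i.1
      inj := fun i j hij => Fin.ext (hinj _ _ (by omega) (by omega) hij)
      first := h0
      last := hn
      adj := fun i => hA.1 i.1 i.2 }
  simp only at h2
  have key := hA.2 i h1 h2
  rcases h3 with ⟨h3, h4⟩ | ⟨⟨_, _, h3⟩, h4⟩
  · refine key.1 (fun hc => h3 ⟨h1, h2, hc⟩) h4
  · obtain ⟨d, hd, hd'⟩ := key.2 h3
    exact h4 d hd hd'

/-- Natural-number indexed version of a path. -/
theorem exists_path_of_not_dSep (D : Dag V) {x y : V} {S : Set V} (h : ¬ D.dSep x y S) :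
    ∃ (n : ℕ) (g : ℕ → V), g 0 = x ∧ g n = y ∧
      (∀ i j, i ≤ n → j ≤ n → g i = g j → i = j) ∧ D.AW S n g := by
  unfold dSep at h
  push Not at h
  obtain ⟨p, hp⟩ := h
  have hg : ∀ i (hi : i < p.n + 1), (fun i => if h : i < p.n + 1 then p.f ⟨i, h⟩ else x) i
    = p.f ⟨i, hi⟩ := fun i hi => by simp [hi]
  refine ⟨p.n, fun i => if h : i < p.n + 1 then p.f ⟨i, h⟩ else x, ?_, ?_, ?_, ?_, ?_⟩
  · rw [hg 0 (by omega)]; exact p.first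
  · rw [hg p.n (by omega)]; exact p.last
  · intro i j hi hj hij
    rw [hg i (by omega), hg j (by omega)] at hij
    simpa using p.inj hij
  · intro i hi
    rw [hg i (by omega), hg (i + 1) (by omega)]
    exact p.adj ⟨i, hi⟩
  · intro i h1 h2
    unfold Coll
    rw [hg i (by omega), hg (i + 1) (by omega), hg (i - 1) (by omega)]
    constructor
    · intro hc hs
      exact hp ⟨i, h1, h2, Or.inl ⟨fun ⟨_, _, h⟩ => hc h, hs⟩⟩
    · intro hc
      by_contra hcon
      push Not at hcon
      exact hp ⟨i, h1, h2, Or.inr ⟨⟨h1, h2, hc⟩, hcon⟩⟩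

/-- In a walk with no active collider in between, a node pointing forward has a
descendant in `S`, or points all the way. -/
theorem walk_forward (D : Dag V) {S : Set V} {n : ℕ} {g : ℕ → V} (hA : D.AW S n g)
    (i : ℕ) (k : ℕ) (hk : i + k + 1 ≤ n) (h : D.edge (g i) (g (i + 1))) :
    (∃ d, D.Anc (g i) d ∧ d ∈ S) ∨
      (Relation.TransGen D.edge (g i) (g (i + k + 1)) ∧ D.edge (g (i + k)) (g (i + k + 1))) := by
  induction k with
  | zero => exact Or.inr ⟨.single h, h⟩
  | succ k ih =>
    rcases ih (by omega) with h1 | ⟨h1, h2⟩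
    · exact Or.inl h1
    · rcases hA.1 (i + k + 1) (by omega) with h3 | h3
      · exact Or.inr ⟨h1.tail h3, h3⟩
      · left
        obtain ⟨d, hd, hd'⟩ := (hA.2 (i + k + 1) (by omega) (by omega)).2 ⟨by simpa using h2, h3⟩
        exact ⟨d, h1.to_reflTransGen.trans hd, hd'⟩

theorem not_trans_cycle (D : Dag V) {a : V} (h : Relation.TransGen D.edge a a) : False := by
  obtain ⟨b, h1, h2⟩ := Relation.TransGen.head'_iff.1 h
  exact D.acyclic a b h1 h2

/-- A shortest active walk is a path. -/
theorem path_of_walk (D : Dag V) {x y : V} {S : Set V} :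
    ∀ (n : ℕ) (g : ℕ → V), g 0 = x → g n = y → D.AW S n g → ¬ D.dSep x y S := by
  intro n
  induction n using Nat.strong_induction_on with
  | _ n ih =>
  intro g h0 hn hA
  by_cases hinj : ∀ i j, i ≤ n → j ≤ n → g i = g j → i = j
  · exact not_dSep_of_path D n g h0 hn hinj hA
  have : ∃ i j, i < j ∧ j ≤ n ∧ g i = g j := by
    push Not at hinj
    obtain ⟨i, j, h1, h2, h3, h4⟩ := hinj
    rcases Nat.lt_or_gt_of_ne h4 with h | h
    · exact ⟨i, j, h, h2, h3⟩
    · exact ⟨j, i, h, h1, h3.symm⟩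
  obtain ⟨i, j, hij, hj, he⟩ := this
  have gv : ∀ t s, t ≤ i → s = t → (fun t => if t ≤ i then g t else g (t + (j - i))) s = g t := by
    rintro t s h rfl; simp [h]
  have gv' : ∀ t s, i ≤ t → s = t + (j - i) →
      (fun t => if t ≤ i then g t else g (t + (j - i))) t = g s := by
    rintro t s h rfl
    rcases h.eq_or_lt with h | h
    · subst h; simp [he]; congr 1; omega
    · simp [show ¬ t ≤ i by omega]
  refine ih (n - (j - i)) (by omega) (fun t => if t ≤ i then g t else g (t + (j - i))) ?_ ?_ ⟨?_, ?_⟩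
  · simp [h0]
  · rw [← hn]; exact gv' (n - (j - i)) n (by omega) (by omega)
  · intro t ht
    rcases Nat.lt_or_ge t i with h | h
    · rw [gv t t (by omega) rfl, gv (t + 1) (t + 1) (by omega) rfl]
      exact hA.1 t (by omega)
    · rw [gv' t _ h rfl, gv' (t + 1) (t + (j - i) + 1) (by omega) (by omega)]
      exact hA.1 _ (by omega)
  · intro t h1 h2
    unfold Coll
    rcases Nat.lt_trichotomy t i with h | h | h
    · rw [gv t t (by omega) rfl, gv (t + 1) (t + 1) (by omega) rfl, gv (t - 1) (t - 1) (by omega) rfl]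
      exact hA.2 t h1 (by omega)
    · subst h
      rw [gv t t (by omega) rfl, gv (t - 1) (t - 1) (by omega) rfl,
        gv' (t + 1) (j + 1) (by omega) (by omega)]
      have a1 := hA.2 t (by omega) (by omega)
      have a2 := hA.2 j (by omega) (by omega)
      unfold Coll at a1 a2
      constructor
      · intro hc
        by_cases c1 : D.edge (g (t - 1)) (g t)
        · rw [he]
          exact a2.1 (fun hh => hc ⟨c1, by rw [he]; exact hh.2⟩)
        · exact a1.1 (fun hh => c1 hh.1)
      · rintro ⟨c1, c2⟩
        rcases hA.1 t (by omega) with h3 | h3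
        · rcases D.walk_forward hA t (j - 1 - t) (by omega) h3 with h4 | ⟨h4, h5⟩
          · exact h4
          · rw [show t + (j - 1 - t) + 1 = j by omega, ← he] at h4
            exact (D.not_trans_cycle h4).elim
        · exact a1.2 ⟨c1, h3⟩
    · rw [gv' t _ (by omega) rfl, gv' (t + 1) (t + (j - i) + 1) (by omega) (by omega),
        gv' (t - 1) (t + (j - i) - 1) (by omega) (by omega)]
      exact hA.2 _ (by omega) (by omega)

/-- Moral adjacency inside `A`. -/
def Mor (D : Dag V) (A : Set V) (u w : V) : Prop :=
  u ∈ A ∧ w ∈ A ∧ (D.Adj u w ∨ ∃ c ∈ A, D.edge u c ∧ D.edge w c)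

/-- One step in the moral graph, avoiding `S \ {x, y}`. -/
def MStep (D : Dag V) (A S : Set V) (u w : V) : Prop :=
  D.Mor A u w ∧ w ∉ S

def Ancestral (D : Dag V) (A : Set V) : Prop := ∀ u w, D.edge u w → w ∈ A → u ∈ A

theorem Ancestral.anc {D : Dag V} {A : Set V} (h : D.Ancestral A) {u w : V} (huw : D.Anc u w)
    (hw : w ∈ A) : u ∈ A := by
  induction huw using Relation.ReflTransGen.head_induction_on with
  | refl => exact hw
  | head h1 _ ih => exact h _ _ h1 ih

/-- Easy direction of the moralization criterion. -/
theorem dSep_of_sep (D : Dag V) {x y : V} {S A : Set V} (hA : D.Ancestral A)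
    (hx : x ∈ A) (hy : y ∈ A) (hS : S ⊆ A)
    (hsep : ¬ Relation.ReflTransGen (D.MStep A (S \ {x, y})) x y) : D.dSep x y S := by
  by_contra hcon
  obtain ⟨n, g, h0, hn, hinj, hW⟩ := D.exists_path_of_not_dSep hcon
  have fw : ∀ k i, i + k + 1 = n → D.edge (g i) (g (i + 1)) → g i ∈ A := by
    intro k i hk hi
    rcases D.walk_forward hW i k (by omega) hi with ⟨d, h1, h2⟩ | ⟨h1, h2⟩
    · exact hA.anc h1 (hS h2)
    · rw [hk, hn] at h1
      exact hA.anc h1.to_reflTransGen hy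
  have bw : ∀ i, i < n → D.edge (g (i + 1)) (g i) → g (i + 1) ∈ A := by
    intro i
    induction i with
    | zero => intro _ h; rw [h0] at h; exact hA _ _ h hx
    | succ i ih =>
      intro hi h
      refine hA _ _ h ?_
      rcases hW.1 i (by omega) with h1 | h1
      · obtain ⟨d, h3, h4⟩ := (hW.2 (i + 1) (by omega) hi).2 ⟨by simpa using h1, h⟩
        exact hA.anc h3 (hS h4)
      · exact ih (by omega) h1
  have mem : ∀ i, i ≤ n → g i ∈ A := by
    intro i hi
    rcases Nat.eq_zero_or_pos i with h | h
    · subst h; rwa [h0]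
    rcases hi.eq_or_lt with h' | h'
    · subst h'; rwa [hn]
    rcases hW.1 i h' with h1 | h1
    · exact fw (n - 1 - i) i (by omega) h1
    · have h2 := hW.1 (i - 1) (by omega)
      rw [show i - 1 + 1 = i by omega] at h2
      rcases h2 with h2 | h2
      · obtain ⟨d, h3, h4⟩ := (hW.2 i h h').2 ⟨h2, h1⟩
        exact hA.anc h3 (hS h4)
      · have := bw (i - 1) (by omega) (by rwa [show i - 1 + 1 = i by omega])
        rwa [show i - 1 + 1 = i by omega] at this
  have reach : ∀ i, i ≤ n → ¬ (0 < i ∧ i < n ∧ D.Coll g i) →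
      Relation.ReflTransGen (D.MStep A (S \ {x, y})) x (g i) := by
    intro i
    induction i using Nat.strong_induction_on with
    | _ i ih =>
    intro hi hc
    have notS : g i ∉ S \ {x, y} := by
      rintro ⟨h1, h2⟩
      rcases Nat.eq_zero_or_pos i with h | h
      · subst h; simp [h0] at h2
      rcases hi.eq_or_lt with h' | h'
      · subst h'; simp [hn] at h2
      exact (hW.2 i h h').1 (fun hh => hc ⟨h, h', hh⟩) h1
    rcases Nat.eq_zero_or_pos i with h | h
    · subst h; rw [h0]
    obtain ⟨j, rfl⟩ : ∃ j, i = j + 1 := ⟨i - 1, by omega⟩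
    by_cases hcj : 0 < j ∧ j < n ∧ D.Coll g j
    · obtain ⟨k, rfl⟩ : ∃ k, j = k + 1 := ⟨j - 1, by omega⟩
      obtain ⟨_, h6, h7, h8⟩ := hcj
      simp only [Nat.add_sub_cancel] at h7
      refine (ih k (by omega) (by omega) ?_).tail ⟨⟨mem _ (by omega), mem _ (by omega), Or.inr
        ⟨_, mem (k + 1) (by omega), h7, h8⟩⟩, notS⟩
      rintro ⟨_, _, h9⟩
      exact D.edge_asymm h7 h9.2
    · exact (ih j (by omega) (by omega) hcj).tail
        ⟨⟨mem _ (by omega), mem _ (by omega), Or.inl (hW.1 j (by omega))⟩, notS⟩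
  have hfin := reach n le_rfl (by omega)
  rw [hn] at hfin
  exact hsep hfin

/-- There is an active walk from `x` to `u`, ready to be extended when `t` holds
in the form: the last edge has a tail at `u` (or the walk is trivial). -/
def RW (D : Dag V) (S : Set V) (x u : V) : Prop :=
  ∃ n g, g 0 = x ∧ g n = u ∧ D.AW S n g

def RWT (D : Dag V) (S : Set V) (x u : V) : Prop :=
  ∃ n g, g 0 = x ∧ g n = u ∧ D.AW S n g ∧ (0 < n → D.edge (g n) (g (n - 1)))

theorem AW.extend {D : Dag V} {S : Set V} {n : ℕ} {g : ℕ → V} (h : D.AW S n g) {w : V}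
    (hadj : D.Adj (g n) w)
    (hS : g n ∉ S ∨ (D.edge (g (n - 1)) (g n) ∧ D.edge w (g n)))
    (hc : 0 < n → D.edge (g (n - 1)) (g n) → D.edge w (g n) → ∃ d, D.Anc (g n) d ∧ d ∈ S) :
    D.AW S (n + 1) (fun t => if t ≤ n then g t else w) := by
  constructor
  · intro i hi
    rcases Nat.lt_succ_iff_lt_or_eq.1 hi with h1 | h1
    · simpa [h1.le, Nat.succ_le_of_lt h1] using h.1 i h1
    · subst h1; simpa using hadj
  · intro i h0 hi
    unfold Coll
    rcases Nat.lt_succ_iff_lt_or_eq.1 hi with h1 | h1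
    · have := h.2 i h0 h1
      unfold Coll at this
      simpa [h1.le, Nat.succ_le_of_lt h1, show i ≤ n + 1 by omega] using this
    · subst h1
      simp only [le_refl, if_true, show i - 1 ≤ i by omega, show ¬ (i + 1 ≤ i) by omega, if_false]
      exact ⟨fun hh => hS.resolve_right hh, fun hh => hc h0 hh.1 hh.2⟩

theorem RW.extend {D : Dag V} {S : Set V} {x u w : V} (h : D.RW S x u) (hu : u ∉ S)
    (hadj : D.Adj u w) (ha : (∃ d, D.Anc u d ∧ d ∈ S) ∨ D.edge u w) : D.RW S x w := by
  obtain ⟨n, g, h0, hn, hA⟩ := h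
  refine ⟨n + 1, _, ?_, ?_, hA.extend (w := w) (by rwa [hn]) (Or.inl (by rwa [hn])) ?_⟩
  · simpa using h0
  · simp
  · intro _ _ h3
    rw [hn] at *
    rcases ha with ha | ha
    · exact ha
    · exact (D.edge_asymm ha h3).elim

theorem RW.extend' {D : Dag V} {S : Set V} {x u c w : V} (h : D.RW S x u) (hu : u ∉ S)
    (h1 : D.edge u c) (h2 : D.edge w c) (hc : ∃ d, D.Anc c d ∧ d ∈ S) : D.RW S x w := by
  obtain ⟨n, g, h0, hn, hA⟩ := h
  have hB := hA.extend (w := c) (by rw [hn]; exact Or.inl h1) (Or.inl (by rwa [hn]))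
    (fun _ _ h4 => (D.edge_asymm h1 (by rwa [hn] at h4)).elim)
  refine ⟨n + 1 + 1, _, ?_, ?_, hB.extend (w := w) ?_ (Or.inr ?_) ?_⟩
  · simpa using h0
  · simp
  · simpa [Adj] using Or.inr h2
  · simpa [hn] using ⟨h1, h2⟩
  · intro _ _ _; simpa using hc

theorem RWT.extend {D : Dag V} {S : Set V} {x u w : V} (h : D.RWT S x u) (hu : u ∉ S)
    (hadj : D.Adj u w) : D.RW S x w ∧ (D.edge w u → D.RWT S x w) := by
  obtain ⟨n, g, h0, hn, hA, hT⟩ := h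
  have := hA.extend (w := w) (by rwa [hn]) (Or.inl (by rwa [hn]))
    (fun h1 h2 => (D.edge_asymm h2 (hT h1)).elim)
  refine ⟨⟨n + 1, _, ?_, ?_, this⟩, fun he => ⟨n + 1, _, ?_, ?_, this, ?_⟩⟩
  · simpa using h0
  · simp
  · simpa using h0
  · simp
  · intro _; simpa [hn] using he

theorem RWT.toRW {D : Dag V} {S : Set V} {x u : V} (h : D.RWT S x u) : D.RW S x u := by
  obtain ⟨n, g, h0, hn, hA, hT⟩ := h
  exact ⟨n, g, h0, hn, hA⟩

theorem RWT.refl (D : Dag V) (S : Set V) (x : V) : D.RWT S x x :=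
  ⟨0, fun _ => x, rfl, rfl, ⟨by intro i hi; omega, by intro i h hi; omega⟩, by omega⟩

/-- walk up from `x` to an ancestor which is not an ancestor of `S`. -/
theorem RWT.of_anc {D : Dag V} {S : Set V} {x u : V} (h : D.Anc u x)
    (hu : ¬ ∃ d, D.Anc u d ∧ d ∈ S) : D.RWT S x u := by
  induction h using Relation.ReflTransGen.head_induction_on with
  | refl => exact RWT.refl D S x
  | @head a c h1 h2 ih =>
    have hc : ¬ ∃ d, D.Anc c d ∧ d ∈ S := fun ⟨d, h3, h4⟩ => hu ⟨d, .head h1 h3, h4⟩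
    exact ((ih hc).extend (fun h => hc ⟨c, .refl, h⟩) (Or.inr h1)).2 h1

theorem RW.to_desc {D : Dag V} {S : Set V} {x u y : V} (h : D.RW S x u) (huy : D.Anc u y)
    (hu : ¬ ∃ d, D.Anc u d ∧ d ∈ S) : D.RW S x y := by
  induction huy using Relation.ReflTransGen.head_induction_on with
  | refl => exact h
  | @head a c h1 h2 ih =>
    have hc : ¬ ∃ d, D.Anc c d ∧ d ∈ S := fun ⟨d, h3, h4⟩ => hu ⟨d, .head h1 h3, h4⟩
    exact ih (h.extend (fun h => hu ⟨a, .refl, h⟩) (Or.inl h1) (Or.inr h1)) hc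

/-- Hard direction of the moralization criterion. -/
theorem sep_of_dSep (D : Dag V) {x y : V} {S : Set V} (hd : D.dSep x y S) :
    ∃ A : Set V, D.Ancestral A ∧ x ∈ A ∧ y ∈ A ∧ S ⊆ A ∧
      ¬ Relation.ReflTransGen (D.MStep A (S \ {x, y})) x y := by
  refine ⟨{u | ∃ d, D.Anc u d ∧ (d = x ∨ d = y ∨ d ∈ S)}, ?_, ⟨x, .refl, by simp⟩,
    ⟨y, .refl, by simp⟩, fun s hs => ⟨s, .refl, by simp [hs]⟩, ?_⟩
  · rintro u w h1 ⟨d, h2, h3⟩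
    exact ⟨d, .head h1 h2, h3⟩
  set A : Set V := {u | ∃ d, D.Anc u d ∧ (d = x ∨ d = y ∨ d ∈ S)} with hAdef
  set T := S \ {x, y} with hT
  have hA : ∀ u ∈ A, (∃ d, D.Anc u d ∧ d ∈ T) ∨ ((¬ ∃ d, D.Anc u d ∧ d ∈ T) ∧ D.Anc u x) ∨
      ((¬ ∃ d, D.Anc u d ∧ d ∈ T) ∧ D.Anc u y) := by
    rintro u ⟨d, h1, h2⟩
    by_cases h : ∃ d, D.Anc u d ∧ d ∈ T
    · exact Or.inl h
    · by_cases hdx : d = x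
      · subst hdx; exact Or.inr (Or.inl ⟨h, h1⟩)
      by_cases hdy : d = y
      · subst hdy; exact Or.inr (Or.inr ⟨h, h1⟩)
      exact Or.inl ⟨d, h1, by simp_all⟩
  intro hreach
  have main : D.RW T x y := by
    have norm : ∀ w ∈ A, D.RW T x w →
        D.RW T x y ∨ (D.RW T x w ∧ ∃ d, D.Anc w d ∧ d ∈ T) ∨ D.RWT T x w := by
      intro w hw h
      rcases hA w hw with h1 | ⟨h1, h2⟩ | ⟨h1, h2⟩
      · exact Or.inr (Or.inl ⟨h, h1⟩)
      · exact Or.inr (Or.inr (RWT.of_anc h2 h1))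
      · exact Or.inl (h.to_desc h2 h1)
    have claim : ∀ u, Relation.ReflTransGen (D.MStep A T) x u → u ∉ T ∧
        (D.RW T x y ∨ (D.RW T x u ∧ ∃ d, D.Anc u d ∧ d ∈ T) ∨ D.RWT T x u) := by
      intro u hu
      induction hu with
      | refl => exact ⟨by simp [hT], Or.inr (Or.inr (RWT.refl D T x))⟩
      | @tail u w _ h2 ih =>
        obtain ⟨⟨huA, hwA, hstep⟩, hwT⟩ := h2
        obtain ⟨huT, ih⟩ := ih
        refine ⟨hwT, ?_⟩
        have go : ∀ z, D.Adj u z → D.RW T x y ∨ D.RW T x z := by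
          intro z hz
          rcases ih with ih | ⟨ih1, ih2⟩ | ih
          · exact Or.inl ih
          · exact Or.inr (ih1.extend huT hz (Or.inl ih2))
          · exact Or.inr (ih.extend huT hz).1
        rcases hstep with h | ⟨c, hcA, h1, h2⟩
        · rcases go w h with h | h
          · exact Or.inl h
          · exact norm w hwA h
        · rcases go c (Or.inl h1) with h | h
          · exact Or.inl h
          · rcases hA c hcA with h3 | ⟨h3, h4⟩ | ⟨h3, h4⟩
            · rcases ih with ih | ⟨ih1, ih2⟩ | ih
              · exact Or.inl ih
              · exact norm w hwA (ih1.extend' huT h1 h2 h3)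
              · exact norm w hwA (ih.toRW.extend' huT h1 h2 h3)
            · exact Or.inr (Or.inr (((RWT.of_anc h4 h3).extend
                (fun h => h3 ⟨c, .refl, h⟩) (Or.inr h2)).2 h2))
            · exact Or.inl (h.to_desc h4 h3)
    rcases (claim y hreach).2 with h | h | h
    · exact h
    · exact h.1
    · exact h.toRW
  obtain ⟨n, g, h0, hn, hW⟩ := main
  refine D.path_of_walk n g h0 hn hW ?_
  have : ¬ D.dSep x y T → ¬ D.dSep x y S := by
    intro h
    obtain ⟨n, g, h0, hn, hinj, hW⟩ := D.exists_path_of_not_dSep h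
    refine D.not_dSep_of_path n g h0 hn hinj ⟨hW.1, ?_⟩
    intro i h1 h2
    obtain ⟨h3, h4⟩ := hW.2 i h1 h2
    refine ⟨fun hc hS => h3 hc ⟨hS, ?_⟩, fun hc => ?_⟩
    · rintro (h | h)
      · exact absurd (hinj i 0 (by omega) (by omega) (by rw [h, h0])) (by omega)
      · exact absurd (hinj i n (by omega) (by omega) (by rw [h, hn])) (by omega)
    · obtain ⟨d, h5, h6⟩ := h4 hc
      exact ⟨d, h5, h6.1⟩
  by_contra hh
  exact this hh hd

end Dag
namespace Dag

/-- Local Markov property. -/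
theorem local_markov (D : Dag V) {x y : V} (hxy : ¬ D.Anc x y) (hyx : ¬ D.edge y x) :
    D.dSep x y (D.Pa x) := by
  by_contra hcon
  obtain ⟨n, g, h0, hn, hinj, hW⟩ := D.exists_path_of_not_dSep hcon
  have hpos : 0 < n := by
    rcases Nat.eq_zero_or_pos n with h | h
    · subst h; exact (hxy (by rw [← h0, ← hn]; exact .refl)).elim
    · exact h
  have h01 : D.edge (g 0) (g 1) := by
    rcases hW.1 0 hpos with h | h
    · exact h
    · simp only [Nat.zero_add] at h
      rcases Nat.lt_or_ge 1 n with h1 | h1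
      · refine ((hW.2 1 (by omega) h1).1 (fun hc => ?_) ?_).elim
        · exact D.edge_asymm h hc.1
        · rw [h0] at h; exact h
      · have : n = 1 := by omega
        subst this
        rw [h0, hn] at h
        exact (hyx h).elim
  rcases D.walk_forward hW 0 (n - 1) (by omega) h01 with ⟨d, h1, h2⟩ | ⟨h1, -⟩
  · rw [h0] at h1
    exact D.acyclic _ _ h2 h1
  · rw [show 0 + (n - 1) + 1 = n by omega, h0, hn] at h1
    exact hxy h1.to_reflTransGen

theorem not_dSep_of_adj (D : Dag V) {x y : V} (S : Set V) (h : D.Adj x y) : ¬ D.dSep x y S := by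
  refine D.path_of_walk 1 (fun i => if i = 0 then x else y) rfl rfl ⟨?_, ?_⟩
  · intro i hi
    obtain rfl : i = 0 := by omega
    simpa using h
  · intro i h1 h2; omega

theorem collider_of_dSep (D : Dag V) {x c y : V} {S : Set V} (h1 : D.Adj x c) (h2 : D.Adj c y)
    (hc : c ∉ S) (h : D.dSep x y S) : D.edge x c ∧ D.edge y c := by
  by_contra hcon
  refine D.path_of_walk (S := S) 2 (fun i => if i = 0 then x else if i = 1 then c else y) rfl rfl
    ⟨?_, ?_⟩ h
  · intro i hi
    obtain rfl | rfl : i = 0 ∨ i = 1 := by omega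
    · simpa using h1
    · simpa using h2
  · intro i hi hi'
    obtain rfl : i = 1 := by omega
    simp [Coll, hc]
    intro h3 h4
    exact (hcon ⟨h3, h4⟩).elim

theorem anc_antisymm (D : Dag V) {a b : V} (h1 : D.Anc a b) (h2 : D.Anc b a) : a = b := by
  by_contra hne
  rcases Relation.ReflTransGen.cases_head h1 with h | ⟨c, h3, h4⟩
  · exact hne h
  · exact D.acyclic _ _ h3 (h4.trans h2)

/-- Same skeleton and same immoralities. -/
def Same (D D' : Dag V) : Prop :=
  (∀ a b, D.Adj a b ↔ D'.Adj a b) ∧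
  (∀ a b c, a ≠ b → ¬ D.Adj a b → D.edge a c → D.edge b c → D'.edge a c ∧ D'.edge b c) ∧
  (∀ a b c, a ≠ b → ¬ D.Adj a b → D'.edge a c → D'.edge b c → D.edge a c ∧ D.edge b c)

theorem MEquiv.symm' {D D' : Dag V} (h : D.MEquiv D') : D'.MEquiv D := fun x y S => (h x y S).symm

theorem MEquiv.trans' {D D' D'' : Dag V} (h : D.MEquiv D') (h' : D'.MEquiv D'') : D.MEquiv D'' :=
  fun x y S => (h x y S).trans (h' x y S)

theorem MEquiv.refl' (D : Dag V) : D.MEquiv D := fun _ _ _ => Iff.rfl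

theorem MEquiv.adj {D D' : Dag V} (h : D.MEquiv D') {a b : V} (hab : D'.Adj a b) : D.Adj a b := by
  by_contra hcon
  have hne : a ≠ b := by
    rintro rfl
    exact D'.edge_irrefl a (by rcases hab with h | h <;> exact h)
  by_cases h1 : D.Anc a b
  · have h2 : ¬ D.Anc b a := fun h2 => hne (D.anc_antisymm h1 h2)
    exact D'.not_dSep_of_adj _ hab.symm' ((h _ _ _).1 (D.local_markov h2 (fun h => hcon (Or.inl h))))
  · exact D'.not_dSep_of_adj _ hab ((h _ _ _).1 (D.local_markov h1 (fun h => hcon (Or.inr h))))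

theorem MEquiv.imm {D D' : Dag V} (h : D.MEquiv D') {a b c : V} (hne : a ≠ b) (hab : ¬ D.Adj a b)
    (hac : D.edge a c) (hbc : D.edge b c) : D'.edge a c ∧ D'.edge b c := by
  have k1 : D'.Adj a c := h.symm'.adj (Or.inl hac)
  have k2 : D'.Adj b c := h.symm'.adj (Or.inl hbc)
  by_cases h1 : D.Anc a b
  · have h2 : ¬ D.Anc b a := fun h2 => hne (D.anc_antisymm h1 h2)
    exact (D'.collider_of_dSep k2 k1.symm' (fun hc => D.edge_asymm hbc hc)
      ((h _ _ _).1 (D.local_markov h2 (fun h => hab (Or.inl h))))).symm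
  · exact D'.collider_of_dSep k1 k2.symm' (fun hc => D.edge_asymm hac hc)
      ((h _ _ _).1 (D.local_markov h1 (fun h => hab (Or.inr h))))

theorem MEquiv.same {D D' : Dag V} (h : D.MEquiv D') : D.Same D' := by
  refine ⟨fun a b => ⟨fun h' => h.symm'.adj h', fun h' => h.adj h'⟩, ?_, ?_⟩
  · intro a b c h1 h2 h3 h4
    exact h.imm h1 h2 h3 h4
  · intro a b c h1 h2 h3 h4
    exact h.symm'.imm h1 (fun h5 => h2 (h.adj h5)) h3 h4

theorem Same.symm' {D D' : Dag V} (h : D.Same D') : D'.Same D := by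
  obtain ⟨h1, h2, h3⟩ := h
  refine ⟨fun a b => (h1 a b).symm, ?_, ?_⟩
  · intro a b c; rw [← h1]; exact h3 a b c
  · intro a b c; rw [← h1]; exact h2 a b c

theorem Same.trans' {D D' D'' : Dag V} (h : D.Same D') (h' : D'.Same D'') : D.Same D'' := by
  refine ⟨fun a b => (h.1 a b).trans (h'.1 a b), ?_, ?_⟩
  · intro a b c n1 n2 n3 n4
    obtain ⟨e1, e2⟩ := h.2.1 a b c n1 n2 n3 n4
    exact h'.2.1 a b c n1 (fun hh => n2 ((h.1 _ _).2 hh)) e1 e2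
  · intro a b c n1 n2 n3 n4
    obtain ⟨e1, e2⟩ := h'.2.2 a b c n1 (fun hh => n2 ((h.1 _ _).2 hh)) n3 n4
    exact h.2.2 a b c n1 n2 e1 e2

/-- `D'` arises from `D` by reversing the covered edge `a → b`. -/
structure CovFlip (D D' : Dag V) (a b : V) : Prop where
  e : D.edge a b
  e' : D'.edge b a
  same : ∀ u w, ¬ (u = a ∧ w = b) → ¬ (u = b ∧ w = a) → (D.edge u w ↔ D'.edge u w)
  cov : ∀ p, p ≠ a → p ≠ b → (D.edge p a ↔ D.edge p b)

theorem CovFlip.symm' {D D' : Dag V} {a b : V} (h : CovFlip D D' a b) : CovFlip D' D b a := by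
  refine ⟨h.e', h.e, fun u w h1 h2 => (h.same u w h2 h1).symm, fun p h1 h2 => ?_⟩
  rw [← h.same p b (by tauto) (by tauto), ← h.same p a (by tauto) (by tauto)]
  exact (h.cov p h2 h1).symm

/-- Adding a sink `b` whose parents already form a clique does not change separation. -/
theorem CovFlip.sep_insert {D D' : Dag V} {a b x y : V} {A T : Set V} (h : CovFlip D D' a b)
    (hA : D.Ancestral A) (haA : a ∈ A) (hbA : b ∉ A) (hxA : x ∈ A) (hyA : y ∈ A)
    (hsep : ¬ Relation.ReflTransGen (D.MStep A T) x y) :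
    ¬ Relation.ReflTransGen (D.MStep (insert b A) T) x y := by
  intro hr
  have nochild : ∀ c ∈ insert b A, ¬ D.edge b c := by
    rintro c (rfl | hc) h1
    · exact D.edge_irrefl _ h1
    · exact hbA (hA _ _ h1 hc)
  have hne : a ≠ b := by rintro rfl; exact hbA haA
  have clique : ∀ u w, D.edge u b → D.edge w b → u ≠ w → D.Mor A u w := by
    intro u w hu hw huw
    have ku : u = a ∨ D.edge u a := by
      by_cases hua : u = a
      · exact Or.inl hua
      · exact Or.inr ((h.cov u hua (by rintro rfl; exact D.edge_irrefl _ hu)).2 hu)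
    have kw : w = a ∨ D.edge w a := by
      by_cases hua : w = a
      · exact Or.inl hua
      · exact Or.inr ((h.cov w hua (by rintro rfl; exact D.edge_irrefl _ hw)).2 hw)
    have hu' : u ∈ A := by rcases ku with rfl | k; exacts [haA, hA _ _ k haA]
    have hw' : w ∈ A := by rcases kw with rfl | k; exacts [haA, hA _ _ k haA]
    refine ⟨hu', hw', ?_⟩
    rcases ku with rfl | ku <;> rcases kw with rfl | kw
    · exact (huw rfl).elim
    · exact Or.inl (Or.inr kw)
    · exact Or.inl (Or.inl ku)
    · exact Or.inr ⟨a, haA, ku, kw⟩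
  have claim : ∀ u, Relation.ReflTransGen (D.MStep (insert b A) T) x u →
      (u ∈ A → Relation.ReflTransGen (D.MStep A T) x u) ∧
      (u = b → ∀ w, D.edge w b → w ∉ T → Relation.ReflTransGen (D.MStep A T) x w) := by
    intro u hu
    induction hu with
    | refl => exact ⟨fun _ => .refl, fun hb => (hbA (hb ▸ hxA)).elim⟩
    | @tail u w _ h2 ih =>
      obtain ⟨⟨huA, hwA, hm⟩, hwT⟩ := h2
      constructor
      · intro hwA'
        rcases huA with rfl | huA
        · -- coming from `b`
          rcases hm with hm | ⟨c, hc, h3, h4⟩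
          · rcases hm with hm | hm
            · exact (nochild _ hwA hm).elim
            · exact ih.2 rfl w hm hwT
          · exact (nochild _ hc h3).elim
        · have ihu := ih.1 huA
          rcases hm with hm | ⟨c, hc, h3, h4⟩
          · exact ihu.tail ⟨⟨huA, hwA', Or.inl hm⟩, hwT⟩
          · rcases hc with rfl | hc
            · by_cases huw : u = w
              · subst huw; exact ihu
              · exact ihu.tail ⟨clique u w h3 h4 huw, hwT⟩
            · exact ihu.tail ⟨⟨huA, hwA', Or.inr ⟨c, hc, h3, h4⟩⟩, hwT⟩
      · rintro rfl z hz hzT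
        rcases huA with rfl | huA
        · exact ih.2 rfl z hz hzT
        · have hub : D.edge u w := by
            rcases hm with hm | ⟨c, hc, h3, h4⟩
            · rcases hm with hm | hm
              · exact hm
              · exact (nochild _ (Or.inr huA) hm).elim
            · exact (nochild _ hc h4).elim
          by_cases huz : u = z
          · subst huz; exact ih.1 huA
          · exact (ih.1 huA).tail ⟨clique u z hub hz huz, hzT⟩
  exact hsep ((claim y hr).1 hyA)

theorem CovFlip.adj {D D' : Dag V} {a b : V} (h : CovFlip D D' a b) {u w : V}
    (h1 : D'.Adj u w) : D.Adj u w := by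
  have he := h.e
  by_cases c1 : u = a ∧ w = b
  · obtain ⟨rfl, rfl⟩ := c1; exact Or.inl he
  by_cases c2 : u = b ∧ w = a
  · obtain ⟨rfl, rfl⟩ := c2; exact Or.inr he
  rcases h1 with h1 | h1
  · exact Or.inl ((h.same u w c1 c2).2 h1)
  · exact Or.inr ((h.same w u (by tauto) (by tauto)).2 h1)

theorem CovFlip.dSep_aux {D D' : Dag V} {a b x y : V} {A S : Set V} (h : CovFlip D D' a b)
    (hab : a ∈ A ↔ b ∈ A) (hA : D.Ancestral A) (hx : x ∈ A) (hy : y ∈ A) (hS : S ⊆ A)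
    (hsep : ¬ Relation.ReflTransGen (D.MStep A (S \ {x, y})) x y) : D'.dSep x y S := by
  refine D'.dSep_of_sep (A := A) ?_ hx hy hS ?_
  · intro u w h1 h2
    by_cases c1 : u = b ∧ w = a
    · obtain ⟨rfl, rfl⟩ := c1; exact hab.1 h2
    by_cases c2 : u = a ∧ w = b
    · obtain ⟨rfl, rfl⟩ := c2; exact hab.2 h2
    exact hA _ _ ((h.same u w c2 c1).2 h1) h2
  · intro hr
    refine hsep ?_
    clear hsep
    have edgeb : ∀ u, D'.edge u b → D.edge u b := by
      intro u hu
      refine (h.same u b ?_ ?_).2 hu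
      · rintro ⟨rfl, -⟩; exact D'.edge_asymm hu h.e'
      · rintro ⟨rfl, -⟩; exact D'.edge_irrefl _ hu
    have edgea : ∀ u, D'.edge u a → u = b ∨ D.edge u a := by
      intro u hu
      by_cases hub : u = b
      · exact Or.inl hub
      · refine Or.inr ((h.same u a ?_ (by tauto)).2 hu)
        rintro ⟨rfl, -⟩; exact D'.edge_irrefl _ hu
    have ab' : ∀ u, D.edge u a → D.edge u b := by
      intro u hu
      refine (h.cov u ?_ ?_).1 hu
      · rintro rfl; exact D.edge_irrefl _ hu
      · rintro rfl; exact D.edge_asymm hu h.e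
    refine Relation.ReflTransGen.trans_induction_on (motive := fun {u w} _ =>
      Relation.ReflTransGen (D.MStep A (S \ {x, y})) u w) hr (fun _ => .refl) ?_
      (fun _ _ h1 h2 => h1.trans h2)
    rintro u w ⟨⟨hu, hw, hm⟩, hwT⟩
    by_cases huw : u = w
    · subst huw; exact .refl
    refine .single ⟨⟨hu, hw, ?_⟩, hwT⟩
    rcases hm with hm | ⟨c, hc, h1, h2⟩
    · exact Or.inl (h.adj hm)
    · by_cases hcb : c = b
      · subst hcb; exact Or.inr ⟨c, hc, edgeb _ h1, edgeb _ h2⟩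
      by_cases hca : c = a
      · subst hca
        rcases edgea _ h1 with rfl | k1 <;> rcases edgea _ h2 with rfl | k2
        · exact (huw rfl).elim
        · exact Or.inl (Or.inr (ab' _ k2))
        · exact Or.inl (Or.inl (ab' _ k1))
        · exact Or.inr ⟨c, hc, k1, k2⟩
      · exact Or.inr ⟨c, hc, (h.same u c (by tauto) (by tauto)).2 h1,
          (h.same w c (by tauto) (by tauto)).2 h2⟩

theorem CovFlip.dSep {D D' : Dag V} {a b x y : V} {S : Set V} (h : CovFlip D D' a b)
    (hd : D.dSep x y S) : D'.dSep x y S := by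
  obtain ⟨A, hA, hx, hy, hS, hsep⟩ := D.sep_of_dSep hd
  by_cases ha : a ∈ A
  · by_cases hb : b ∈ A
    · exact h.dSep_aux (by tauto) hA hx hy hS hsep
    · refine h.dSep_aux (A := insert b A) (by simp [ha]) ?_ (Or.inr hx) (Or.inr hy)
        (fun s hs => Or.inr (hS hs)) (h.sep_insert hA ha hb hx hy hsep)
      rintro u w h1 (rfl | h2)
      · right
        by_cases hua : u = a
        · subst hua; exact ha
        · exact hA _ _ ((h.cov u hua (by rintro rfl; exact D.edge_irrefl _ h1)).2 h1) ha
      · exact Or.inr (hA _ _ h1 h2)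
  · have hb : b ∉ A := fun hb => ha (hA _ _ h.e hb)
    exact h.dSep_aux (by tauto) hA hx hy hS hsep

theorem CovFlip.mequiv {D D' : Dag V} {a b : V} (h : CovFlip D D' a b) : D.MEquiv D' :=
  fun _ _ _ => ⟨h.dSep, h.symm'.dSep⟩

/-- A covered edge can be reversed. -/
theorem exists_covFlip (D : Dag V) {a b : V} (hab : D.edge a b)
    (hcov : ∀ p, p ≠ a → p ≠ b → (D.edge p a ↔ D.edge p b)) :
    ∃ D' : Dag V, CovFlip D D' a b := by
  let E : V → V → Prop := fun u w => D.edge u w ∧ ¬ (u = a ∧ w = b)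
  have hEanc : ∀ u w, Relation.ReflTransGen E u w → D.Anc u w := fun u w h =>
    rtg_mono (fun _ _ h => h.1) h
  have hEab : ¬ Relation.ReflTransGen E a b := by
    intro h
    rcases Relation.ReflTransGen.cases_tail h with h1 | ⟨p, h1, h2, h3⟩
    · subst h1; exact D.edge_irrefl _ hab
    · have hpa : p ≠ a := fun h => h3 ⟨h, rfl⟩
      have hpb : p ≠ b := by rintro rfl; exact D.edge_irrefl _ h2
      exact D.acyclic _ _ ((hcov p hpa hpb).2 h2) (hEanc _ _ h1)
  let F : V → V → Prop := fun u w => E u w ∨ (u = b ∧ w = a)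
  have claim : ∀ u w, Relation.ReflTransGen F u w →
      Relation.ReflTransGen E u w ∨ (Relation.ReflTransGen E u b ∧ Relation.ReflTransGen E a w) := by
    intro u w h
    induction h with
    | refl => exact Or.inl .refl
    | tail _ h2 ih =>
      rcases h2 with h2 | ⟨rfl, rfl⟩
      · rcases ih with ih | ⟨i1, i2⟩
        · exact Or.inl (ih.tail h2)
        · exact Or.inr ⟨i1, i2.tail h2⟩
      · rcases ih with ih | ⟨i1, i2⟩
        · exact Or.inr ⟨ih, .refl⟩
        · exact Or.inr ⟨i1, .refl⟩
  refine ⟨⟨F, ?_⟩, hab, Or.inr ⟨rfl, rfl⟩, ?_, hcov⟩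
  · rintro u w (h | ⟨rfl, rfl⟩) hr
    · rcases claim _ _ hr with h1 | ⟨h1, h2⟩
      · exact D.acyclic _ _ h.1 (hEanc _ _ h1)
      · exact hEab ((h2.tail h).trans h1)
    · rcases claim _ _ hr with h1 | ⟨h1, h2⟩
      · exact hEab h1
      · exact hEab h1
  · intro u w h1 h2
    simp only [F, E, h2, or_false, h1, not_false_eq_true, and_true]

theorem wf_trans [Finite V] (D : Dag V) : WellFounded (Relation.TransGen D.edge) := by
  have : IsTrans V (Relation.TransGen D.edge) := ⟨fun _ _ _ h1 h2 => h1.trans h2⟩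
  have : Std.Irrefl (Relation.TransGen D.edge) := ⟨fun _ h => D.not_trans_cycle h⟩
  exact Finite.wellFounded_of_trans_of_irrefl _

theorem wf_trans' [Finite V] (D : Dag V) :
    WellFounded (fun u w => Relation.TransGen D.edge w u) := by
  have : IsTrans V (fun u w => Relation.TransGen D.edge w u) := ⟨fun _ _ _ h1 h2 => h2.trans h1⟩
  have : Std.Irrefl (fun u w => Relation.TransGen D.edge w u) := ⟨fun _ h => D.not_trans_cycle h⟩
  exact Finite.wellFounded_of_trans_of_irrefl _

/-- Chickering's lemma: a covered edge among the differing edges. -/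
theorem Same.exists_covered [Finite V] {D D' : Dag V} (h : D.Same D')
    (hne : ∃ a b, D.edge a b ∧ D'.edge b a) :
    ∃ a b, D.edge a b ∧ D'.edge b a ∧ ∀ p, p ≠ a → p ≠ b → (D.edge p a ↔ D.edge p b) := by
  obtain ⟨b, ⟨a0, ha0⟩, hbmin⟩ := D.wf_trans.has_min {b | ∃ a, D.edge a b ∧ D'.edge b a}
    (by obtain ⟨a, b, h⟩ := hne; exact ⟨b, a, h⟩)
  obtain ⟨a, ⟨hab, hba⟩, hamax⟩ := D.wf_trans'.has_min {a | D.edge a b ∧ D'.edge b a} ⟨a0, ha0⟩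
  have keep : ∀ u w, D.edge u w → Relation.TransGen D.edge w b → D'.edge u w := by
    intro u w h1 h2
    rcases (h.1 u w).1 (Or.inl h1) with h3 | h3
    · exact h3
    · exact (hbmin w ⟨u, h1, h3⟩ h2).elim
  refine ⟨a, b, hab, hba, fun p hpa hpb => ⟨fun hp => ?_, fun hp => ?_⟩⟩
  · have hp' := keep p a hp (.single hab)
    have hadj : D.Adj p b := by
      by_contra hcon
      exact D.edge_asymm hab (h.2.2 p b a hpb hcon hp' hba).2
    rcases hadj with h1 | h1
    · exact h1
    · exact (D.acyclic _ _ h1 (.head hp (.single hab))).elim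
  · have hadj : D.Adj p a := by
      by_contra hcon
      exact D'.edge_asymm hba (h.2.1 p a b hpa hcon hp hab).2
    rcases hadj with h1 | h1
    · exact h1
    · have h2 := keep a p h1 (.single hp)
      rcases (h.1 p b).1 (Or.inl hp) with h3 | h3
      · exact (D'.acyclic _ _ h2 (.head h3 (.single hba))).elim
      · exact (hamax p ⟨hp, h3⟩ (.single h1)).elim

/-- Verma–Pearl. -/
theorem Same.mequiv [Finite V] {D' : Dag V} : ∀ (n : ℕ) (D : Dag V),
    {q : V × V | D.edge q.1 q.2 ∧ D'.edge q.2 q.1}.ncard = n → D.Same D' → D.MEquiv D' := by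
  intro n
  induction n using Nat.strong_induction_on with
  | _ n ih =>
  intro D hn h
  by_cases hne : ∃ a b, D.edge a b ∧ D'.edge b a
  · obtain ⟨a, b, h1, h2, h3⟩ := h.exists_covered hne
    obtain ⟨D1, hD1⟩ := D.exists_covFlip h1 h3
    have hm := hD1.mequiv
    refine hm.trans' (ih _ ?_ D1 rfl (hm.same.symm'.trans' h))
    rw [← hn]
    refine Set.ncard_lt_ncard ?_ (Set.toFinite _)
    refine (Set.ssubset_iff_of_subset ?_).2 ⟨(a, b), ⟨h1, h2⟩, fun hh => ?_⟩
    · rintro ⟨u, w⟩ ⟨h4, h5⟩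
      refine ⟨(hD1.same u w ?_ ?_).2 h4, h5⟩
      · rintro ⟨rfl, rfl⟩; exact D1.edge_asymm h4 hD1.e'
      · rintro ⟨rfl, rfl⟩; exact D'.edge_asymm h2 h5
    · exact D1.edge_asymm hh.1 hD1.e'
  · push Not at hne
    have : D = D' := by
      have he : D.edge = D'.edge := by
        funext u w
        refine propext ⟨fun h1 => ?_, fun h1 => ?_⟩
        · rcases (h.1 u w).1 (Or.inl h1) with h2 | h2
          · exact h2
          · exact (hne u w h1 h2).elim
        · rcases (h.1 u w).2 (Or.inl h1) with h2 | h2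
          · exact h2
          · exact (hne w u h2 h1).elim
      cases D; cases D'; simp at he; subst he; rfl
    subst this
    exact MEquiv.refl' D

end Dag
/-- In a chordal-like graph there is a simplicial vertex outside any proper clique. -/
theorem exists_simplicial (H : V → V → Prop) (hs : ∀ u w, H u w → H w u)
    (hE : ∀ W : Finset V, W.Nonempty → ∃ s ∈ W, ∀ u ∈ W, ∀ t ∈ W, H s u → H s t → u ≠ t → H u t)
    (W : Finset V) : ∀ K : Finset V, K ⊆ W → K ≠ W → (∀ u ∈ K, ∀ t ∈ K, u ≠ t → H u t) →
      ∃ z ∈ W, z ∉ K ∧ ∀ u ∈ W, ∀ t ∈ W, H z u → H z t → u ≠ t → H u t := by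
  classical
  induction W using Finset.strongInduction with
  | H W ih =>
  intro K hKW hne hK
  obtain ⟨z0, hz0, hz0K⟩ : ∃ z ∈ W, z ∉ K := by
    by_contra hcon
    push Not at hcon
    exact hne (Finset.Subset.antisymm hKW hcon)
  obtain ⟨s, hsW, hsimp⟩ := hE W ⟨z0, hz0⟩
  by_cases hsK : s ∈ K
  · set K' := (W.erase s).filter (fun u => H s u) with hK'
    have hcl : ∀ u ∈ K', ∀ t ∈ K', u ≠ t → H u t := by
      intro u hu t ht hut
      simp only [hK', Finset.mem_filter, Finset.mem_erase] at hu ht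
      exact hsimp u hu.1.2 t ht.1.2 hu.2 ht.2 hut
    by_cases hfull : K' = W.erase s
    · refine ⟨z0, hz0, hz0K, fun u hu t ht _ _ hut => ?_⟩
      have hsu : ∀ u ∈ W, u ≠ s → u ∈ K' := by
        intro u hu hus
        rw [hfull]; exact Finset.mem_erase.2 ⟨hus, hu⟩
      by_cases h1 : u = s
      · subst h1
        exact (Finset.mem_filter.1 (hsu t ht (Ne.symm hut))).2
      · by_cases h2 : t = s
        · subst h2
          exact hs _ _ (Finset.mem_filter.1 (hsu u hu hut)).2
        · exact hcl u (hsu u hu h1) t (hsu t ht h2) hut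
    · obtain ⟨z, hz, hzK', hzs⟩ := ih (W.erase s) (Finset.erase_ssubset hsW) K'
        (Finset.filter_subset _ _) hfull hcl
      have hzs' : ¬ H s z := fun h => hzK' (Finset.mem_filter.2 ⟨hz, h⟩)
      obtain ⟨hz1, hz2⟩ := Finset.mem_erase.1 hz
      refine ⟨z, hz2, fun hzK => hzs' (hK s hsK z hzK (Ne.symm hz1)), ?_⟩
      intro u hu t ht h1 h2 hut
      refine hzs u (Finset.mem_erase.2 ⟨?_, hu⟩) t (Finset.mem_erase.2 ⟨?_, ht⟩) h1 h2 hut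
      · rintro rfl; exact hzs' (hs _ _ h1)
      · rintro rfl; exact hzs' (hs _ _ h2)
  · exact ⟨s, hsW, hsK, hsimp⟩

/-- A perfect ordering starting with two prescribed adjacent vertices. -/
theorem exists_order (H : V → V → Prop) (hs : ∀ u w, H u w → H w u)
    (hE : ∀ W : Finset V, W.Nonempty → ∃ s ∈ W, ∀ u ∈ W, ∀ t ∈ W, H s u → H s t → u ≠ t → H u t)
    (x v : V) (hxv : H x v) (hne : x ≠ v) (W : Finset V) : x ∈ W → v ∈ W →
      ∃ r : V → ℕ, r x = 0 ∧ r v = 1 ∧ (∀ w ∈ W, w ≠ x → w ≠ v → 2 ≤ r w) ∧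
        (∀ u ∈ W, ∀ w ∈ W, r u = r w → u = w) ∧
        (∀ u ∈ W, ∀ t ∈ W, ∀ w ∈ W, H u w → H t w → r u < r w → r t < r w → u ≠ t → H u t) := by
  classical
  induction W using Finset.strongInduction with
  | H W ih =>
  intro hx hv
  by_cases hW : ({x, v} : Finset V) = W
  · subst hW
    refine ⟨fun w => if w = x then 0 else 1, by simp, by simp [hne.symm], ?_, ?_, ?_⟩
    · intro w hw h1 h2; simp [h1, h2] at hw
    · intro u hu w hw h
      simp only [Finset.mem_insert, Finset.mem_singleton] at hu hw
      rcases hu with rfl | rfl <;> rcases hw with rfl | rfl <;> simp_all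
    · intro u hu t ht w hw _ _ h1 h2 hut
      simp only [Finset.mem_insert, Finset.mem_singleton] at hu ht hw
      have : u = x := by by_contra h; simp [h] at h1; split_ifs at h1 <;> omega
      have : t = x := by by_contra h; simp [h] at h2; split_ifs at h2 <;> omega
      simp_all
  · obtain ⟨z, hzW, hzK, hz⟩ := exists_simplicial H hs hE W {x, v}
      (by intro u hu; simp at hu; rcases hu with rfl | rfl <;> assumption) hW
      (by
        intro u hu t ht hut
        simp only [Finset.mem_insert, Finset.mem_singleton] at hu ht
        rcases hu with rfl | rfl <;> rcases ht with rfl | rfl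
        · exact (hut rfl).elim
        · exact hxv
        · exact hs _ _ hxv
        · exact (hut rfl).elim)
    simp only [Finset.mem_insert, Finset.mem_singleton, not_or] at hzK
    obtain ⟨r, r0, r1, r2, rinj, rpeo⟩ := ih (W.erase z) (Finset.erase_ssubset hzW)
      (Finset.mem_erase.2 ⟨Ne.symm hzK.1, hx⟩) (Finset.mem_erase.2 ⟨Ne.symm hzK.2, hv⟩)
    have hlt : ∀ w ∈ W, r w < W.sup r + 2 := by
      intro w hw
      have := Finset.le_sup (f := r) hw
      omega
    have fz : Function.update r z (W.sup r + 2) z = W.sup r + 2 := by simp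
    have fw : ∀ w, w ≠ z → Function.update r z (W.sup r + 2) w = r w := by
      intro w hw; simp [hw]
    refine ⟨Function.update r z (W.sup r + 2), ?_, ?_, ?_, ?_, ?_⟩
    · rw [fw _ (Ne.symm hzK.1), r0]
    · rw [fw _ (Ne.symm hzK.2), r1]
    · intro w hw h1 h2
      by_cases hwz : w = z
      · subst hwz; rw [fz]; omega
      · rw [fw _ hwz]; exact r2 w (Finset.mem_erase.2 ⟨hwz, hw⟩) h1 h2
    · intro u hu w hw h
      by_cases huz : u = z <;> by_cases hwz : w = z
      · rw [huz, hwz]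
      · subst huz; rw [fz, fw _ hwz] at h; have := hlt w hw; omega
      · subst hwz; rw [fz, fw _ huz] at h; have := hlt u hu; omega
      · rw [fw _ hwz, fw _ huz] at h
        exact rinj u (Finset.mem_erase.2 ⟨huz, hu⟩) w (Finset.mem_erase.2 ⟨hwz, hw⟩) h
    · intro u hu t ht w hw h1 h2 h3 h4 hut
      by_cases hwz : w = z
      · subst hwz; exact hz u hu t ht (hs _ _ h1) (hs _ _ h2) hut
      · rw [fw _ hwz] at h3 h4
        have := hlt w hw
        have huz : u ≠ z := by rintro rfl; rw [fz] at h3; omega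
        have htz : t ≠ z := by rintro rfl; rw [fz] at h4; omega
        rw [fw _ huz] at h3
        rw [fw _ htz] at h4
        exact rpeo u (Finset.mem_erase.2 ⟨huz, hu⟩) t (Finset.mem_erase.2 ⟨htz, ht⟩)
          w (Finset.mem_erase.2 ⟨hwz, hw⟩) h1 h2 h3 h4 hut

/-- Normal form: first undirected steps, then directed ones. -/
theorem normal_form {U M : V → V → Prop} (hK : ∀ a b c, M a b → U b c → M a c) {a b : V}
    (h : Relation.ReflTransGen (fun u w => M u w ∨ U u w) a b) :
    ∃ w, Relation.ReflTransGen U a w ∧ Relation.ReflTransGen M w b := by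
  induction h with
  | refl => exact ⟨a, .refl, .refl⟩
  | @tail b c _ h2 ih =>
    obtain ⟨w, h3, h4⟩ := ih
    rcases h2 with h2 | h2
    · exact ⟨w, h3, h4.tail h2⟩
    · rcases Relation.ReflTransGen.cases_tail h4 with h5 | ⟨b', h5, h6⟩
      · subst h5; exact ⟨c, h3.tail h2, .refl⟩
      · exact ⟨w, h3, h5.tail (hK _ _ _ h6 h2)⟩

theorem shift {U M : V → V → Prop} (hK : ∀ a b c, M a b → U b c → M a c) {a b c : V}
    (h : M a b) (hbc : Relation.ReflTransGen U b c) : M a c := by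
  induction hbc with
  | refl => exact h
  | tail _ h2 ih => exact hK _ _ _ ih h2

namespace Dag

/-- Meek closure of the immoralities of `D`. -/
inductive Mk (D : Dag V) : V → V → Prop
  | imm {a b p : V} : D.edge a b → D.edge p b → ¬ D.Adj a p → a ≠ p → Mk D a b
  | r1 {p a b : V} : Mk D p a → D.edge a b → ¬ D.Adj p b → p ≠ b → Mk D a b
  | r2 {a d b : V} : Mk D a d → Mk D d b → D.Adj a b → Mk D a b
  | r3 {a b p q : V} : D.Adj a p → D.Adj a q → Mk D p b → Mk D q b → ¬ D.Adj p q → p ≠ q →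
      D.Adj a b → ¬ (D.edge p a ∧ D.edge q a) → Mk D a b

/-- Edges not oriented by the Meek closure. -/
def Un (D : Dag V) (a b : V) : Prop := D.Adj a b ∧ ¬ D.Mk a b ∧ ¬ D.Mk b a

theorem Un.symm' {D : Dag V} {a b : V} (h : D.Un a b) : D.Un b a :=
  ⟨h.1.symm', h.2.2, h.2.1⟩

theorem Mk.sound {D D' : Dag V} (hS : D.Same D') {a b : V} (h : D.Mk a b) : D'.edge a b := by
  induction h with
  | imm h1 h2 h3 h4 => exact (hS.2.1 _ _ _ h4 h3 h1 h2).1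
  | @r1 p a b _ h1 h2 h3 ih =>
    rcases (hS.1 a b).1 (Or.inl h1) with h | h
    · exact h
    · exact (D.edge_asymm h1 (hS.2.2 p b a h3 h2 ih h).2).elim
  | @r2 a d b _ _ h1 ih1 ih2 =>
    rcases (hS.1 a b).1 h1 with h | h
    · exact h
    · exact (D'.acyclic _ _ h (.head ih1 (.single ih2))).elim
  | @r3 a b p q h1 h2 _ _ h3 h4 h5 h6 ih1 ih2 =>
    rcases (hS.1 a b).1 h5 with h | h
    · exact h
    · have k : ∀ z, D.Adj a z → D'.edge z b → D'.edge z a := by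
        intro z hz hzb
        rcases (hS.1 a z).1 hz with h' | h'
        · exact (D'.acyclic _ _ h (.head h' (.single hzb))).elim
        · exact h'
      exact (h6 (hS.2.2 p q a h4 h3 (k p h1 ih1) (k q h2 ih2))).elim

theorem Same.refl' (D : Dag V) : D.Same D := (MEquiv.refl' D).same

theorem Mk.edge {D : Dag V} {a b : V} (h : D.Mk a b) : D.edge a b := h.sound (Same.refl' D)

theorem Mk.adj_of_un {D : Dag V} {a b c : V} (h : D.Mk a b) (hu : D.Un b c) : D.Adj a c := by
  have hac : a ≠ c := by rintro rfl; exact hu.2.2 h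
  by_contra hcon
  rcases hu.1 with h1 | h1
  · exact hu.2.1 (.r1 h h1 hcon hac)
  · exact hu.2.2 (.imm h1 h.edge (fun h => hcon h.symm') hac.symm)

theorem Mk.shift {D : Dag V} {a b c : V} (h : D.Mk a b) (hu : D.Un b c) : D.Mk a c := by
  induction h with
  | @imm a b p h1 h2 h3 h4 =>
    have m1 : D.Mk a b := .imm h1 h2 h3 h4
    have m2 : D.Mk p b := .imm h2 h1 (fun h => h3 h.symm') h4.symm
    have a1 := m1.adj_of_un hu
    have a2 := m2.adj_of_un hu
    by_cases hh : D.edge a c ∧ D.edge p c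
    · exact .imm hh.1 hh.2 h3 h4
    · exact (hu.2.2 (.r3 a1.symm' a2.symm' m1 m2 h3 h4 hu.1.symm' hh)).elim
  | @r1 p a b h1 h2 h3 h4 ih =>
    have m1 : D.Mk a b := .r1 h1 h2 h3 h4
    have a1 := m1.adj_of_un hu
    by_cases k1 : D.Mk a c
    · exact k1
    by_cases k2 : D.Mk c a
    · exact (hu.2.2 (.r2 k2 m1 hu.1.symm')).elim
    have m2 : D.Mk p c := ih ⟨a1, k1, k2⟩
    rcases hu.1 with h5 | h5
    · exact (hu.2.1 (.imm h5 m2.edge (fun h => h3 h.symm') h4.symm)).elim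
    · exact (hu.2.2 (.r1 m2 h5 h3 h4)).elim
  | @r2 a d b h1 h2 h3 ih1 ih2 =>
    have m1 : D.Mk a b := .r2 h1 h2 h3
    exact .r2 h1 (ih2 hu) (m1.adj_of_un hu)
  | @r3 a b p q h1 h2 h3 h4 h5 h6 h7 h8 ih1 ih2 =>
    have m1 : D.Mk a b := .r3 h1 h2 h3 h4 h5 h6 h7 h8
    exact .r3 h1 h2 (ih1 hu) (ih2 hu) h5 h6 (m1.adj_of_un hu) h8

theorem Un.ne {D : Dag V} {a b : V} (h : D.Un a b) : a ≠ b := by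
  rintro rfl
  exact D.edge_irrefl a (by rcases h.1 with h | h <;> exact h)

theorem un_simplicial [Finite V] (D : Dag V) (W : Finset V) (hW : W.Nonempty) :
    ∃ s ∈ W, ∀ u ∈ W, ∀ t ∈ W, D.Un s u → D.Un s t → u ≠ t → D.Un u t := by
  obtain ⟨s, hs, hmax⟩ := D.wf_trans'.has_min (W : Set V) hW
  refine ⟨s, hs, fun u hu t ht h1 h2 hut => ?_⟩
  have e1 : D.edge u s := by
    rcases h1.1 with h | h
    · exact (hmax u hu (.single h)).elim
    · exact h
  have e2 : D.edge t s := by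
    rcases h2.1 with h | h
    · exact (hmax t ht (.single h)).elim
    · exact h
  refine ⟨?_, fun h => ?_, fun h => ?_⟩
  · by_contra hcon
    exact h1.2.2 (.imm e1 e2 hcon hut)
  · exact h1.2.2 (h.shift h2.symm')
  · exact h2.2.2 (h.shift h1.symm')

/-- Members of the class starting with two prescribed adjacent vertices. -/
theorem exists_member [Finite V] (D : Dag V) (x v : V) (hxv : D.Un x v) :
    ∃ (D' : Dag V) (r : V → ℕ), D.MEquiv D' ∧
      (∀ u w, D'.edge u w ↔ D.Mk u w ∨ (D.Un u w ∧ r u < r w)) ∧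
      r x = 0 ∧ r v = 1 ∧ (∀ w, w ≠ x → w ≠ v → 2 ≤ r w) ∧ (∀ u w, r u = r w → u = w) ∧
      (∀ u t w, D.Un u w → D.Un t w → r u < r w → r t < r w → u ≠ t → D.Un u t) := by
  have := Fintype.ofFinite V
  obtain ⟨r, r0, r1, r2, rinj, rpeo⟩ := exists_order D.Un (fun _ _ h => h.symm')
    D.un_simplicial x v hxv hxv.ne Finset.univ (Finset.mem_univ _) (Finset.mem_univ _)
  simp only [Finset.mem_univ, forall_true_left] at r2 rinj rpeo
  let E : V → V → Prop := fun u w => D.Mk u w ∨ (D.Un u w ∧ r u < r w)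
  have hK : ∀ a b c, D.Mk a b → (D.Un b c ∧ r b < r c) → D.Mk a c := fun a b c h1 h2 =>
    h1.shift h2.1
  have hK' : ∀ a b c, D.Mk a b → D.Un b c → D.Mk a c := fun a b c h1 h2 => h1.shift h2
  have mono : ∀ u w, Relation.ReflTransGen (fun u w => D.Un u w ∧ r u < r w) u w → r u ≤ r w := by
    intro u w h
    induction h with
    | refl => exact le_rfl
    | tail _ h ih => exact ih.trans h.2.le
  have mkanc : ∀ u w, Relation.ReflTransGen D.Mk u w → D.Anc u w := fun u w h =>
    rtg_mono (fun _ _ h => h.edge) h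
  have acyc : ∀ a b, E a b → ¬ Relation.ReflTransGen E b a := by
    intro a b hab hr
    obtain ⟨w, h1, h2⟩ := normal_form hK hr
    rcases hab with hab | hab
    · exact D.acyclic _ _ (shift hK hab h1).edge (mkanc _ _ h2)
    · rcases Relation.ReflTransGen.cases_tail h2 with h3 | ⟨z, h3, h4⟩
      · subst h3
        have := mono _ _ h1
        omega
      · have h5 : D.Mk z w := shift hK (hK _ _ _ h4 hab) h1
        exact D.acyclic _ _ h5.edge (mkanc _ _ h3)
  have hE : ∀ u w, E u w → D.Adj u w := by
    rintro u w (h | h)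
    · exact Or.inl h.edge
    · exact h.1.1
  have hS : D.Same ⟨E, acyc⟩ := by
    refine ⟨fun a b => ⟨fun h => ?_, fun h => ?_⟩, ?_, ?_⟩
    · by_cases m1 : D.Mk a b
      · exact Or.inl (Or.inl m1)
      by_cases m2 : D.Mk b a
      · exact Or.inr (Or.inl m2)
      have hu : D.Un a b := ⟨h, m1, m2⟩
      rcases Nat.lt_trichotomy (r a) (r b) with h1 | h1 | h1
      · exact Or.inl (Or.inr ⟨hu, h1⟩)
      · exact (hu.ne (rinj _ _ h1)).elim
      · exact Or.inr (Or.inr ⟨hu.symm', h1⟩)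
    · rcases h with h | h
      · exact hE _ _ h
      · exact (hE _ _ h).symm'
    · intro a b c h1 h2 h3 h4
      exact ⟨Or.inl (.imm h3 h4 h2 h1), Or.inl (.imm h4 h3 (fun h => h2 h.symm') h1.symm)⟩
    · rintro a b c h1 h2 (h3 | h3) (h4 | h4)
      · exact ⟨h3.edge, h4.edge⟩
      · exact (h2 (h3.adj_of_un h4.1.symm')).elim
      · exact (h2 (h4.adj_of_un h3.1.symm').symm').elim
      · exact (h2 (rpeo a b c h3.1 h4.1 h3.2 h4.2 h1).1).elim
  exact ⟨⟨E, acyc⟩, r, Same.mequiv _ D rfl hS, fun _ _ => Iff.rfl, r0, r1, r2, rinj, rpeo⟩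

theorem cpDir_iff [Finite V] (D : Dag V) (a b : V) : D.CpDir a b ↔ D.Mk a b := by
  refine ⟨fun h => ?_, fun h D' hD' => h.sound hD'.same⟩
  by_contra hcon
  have e := h D (MEquiv.refl' D)
  have hu : D.Un a b := ⟨Or.inl e, hcon, fun h' => D.edge_asymm e h'.edge⟩
  obtain ⟨D', r, hm, he, r0, r1, -⟩ := D.exists_member b a hu.symm'
  have h1 := (he b a).2 (Or.inr ⟨hu.symm', by omega⟩)
  exact D'.edge_asymm h1 (h D' hm)

theorem cpUndir_iff [Finite V] (D : Dag V) (a b : V) : D.CpUndir a b ↔ D.Un a b := by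
  simp [CpUndir, Un, cpDir_iff]

/-- A possibly directed path as a chain. -/
theorem chain_of_possibly [Finite V] (D : Dag V) {x y : V} (p : GPath D.Adj x y)
    (hp : p.CpPossiblyDirected) (i : ℕ) (hi : i < p.n) :
    D.Mk (p.f ⟨i, by omega⟩) (p.f ⟨i + 1, by omega⟩) ∨
      D.Un (p.f ⟨i, by omega⟩) (p.f ⟨i + 1, by omega⟩) := by
  have h1 := hp ⟨i, hi⟩
  have h2 := p.adj ⟨i, hi⟩
  rw [cpDir_iff] at h1
  by_cases h : D.Mk (p.f ⟨i, by omega⟩) (p.f ⟨i + 1, by omega⟩)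
  · exact Or.inl h
  · exact Or.inr ⟨h2, h, h1⟩

theorem chain_of_anc (D : Dag V) {v y : V} (h : D.Anc v y) :
    ∃ (n : ℕ) (g : ℕ → V), g 0 = v ∧ g n = y ∧ ∀ i, i < n → D.edge (g i) (g (i + 1)) := by
  induction h using Relation.ReflTransGen.head_induction_on with
  | refl => exact ⟨0, fun _ => y, rfl, rfl, by omega⟩
  | @head a c h1 _ ih =>
    obtain ⟨n, g, h0, hn, hg⟩ := ih
    refine ⟨n + 1, fun i => Nat.casesOn i a g, rfl, hn, ?_⟩
    intro i hi
    cases i with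
    | zero => simpa [h0] using h1
    | succ i => exact hg i (by omega)

theorem chain_trans (D : Dag V) {n : ℕ} {g : ℕ → V} (hg : ∀ i, i < n → D.edge (g i) (g (i + 1)))
    (i k : ℕ) (hk : i + k + 1 ≤ n) : Relation.TransGen D.edge (g i) (g (i + k + 1)) := by
  induction k with
  | zero => exact .single (hg i (by omega))
  | succ k ih => exact (ih (by omega)).tail (hg _ (by omega))

theorem amenable_forward [Finite V] (D : Dag V) (X Y : V) (hXY : X ≠ Y)
    (hposs : D.PossAn X Y) (ham : D.Amenable X Y) (v : V) (hv : D.Un X v)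
    (D' : Dag V) (hD' : D.MEquiv D') : D'.dSep v Y (D.CpPa v ∪ {X}) := by
  obtain ⟨E, r, hm, he, r0, r1, r2, -⟩ := D.exists_member X v hv
  rw [← hD', hm]
  have hXv : E.edge X v := (he X v).2 (Or.inr ⟨hv, by omega⟩)
  have hPa : D.CpPa v ∪ {X} = E.Pa v := by
    ext u
    simp only [CpPa, Pa, Set.mem_union, Set.mem_ofPred_eq, Set.mem_singleton_iff, cpDir_iff]
    constructor
    · rintro (h | rfl)
      · exact (he u v).2 (Or.inl h)
      · exact hXv
    · intro h
      rcases (he u v).1 h with h | ⟨h1, h2⟩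
      · exact Or.inl h
      · right
        by_contra hne
        have := r2 u hne h1.ne
        omega
  rw [hPa]
  refine E.local_markov ?_ ?_
  · intro hanc
    obtain ⟨n, g, h0, hn, hg⟩ := E.chain_of_anc (v := X) (y := Y) (.head hXv hanc)
    obtain ⟨n, g, h0, h1, hn, hpos, hg⟩ : ∃ (n : ℕ) (g : ℕ → V), g 0 = X ∧ g 1 = v ∧ g n = Y ∧ 0 < n ∧
        ∀ i, i < n → E.edge (g i) (g (i + 1)) := by
      obtain ⟨n, g, h0, hn, hg⟩ := E.chain_of_anc hanc
      refine ⟨n + 1, fun i => Nat.casesOn i X g, rfl, h0, hn, by omega, ?_⟩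
      intro i hi
      cases i with
      | zero => simpa [h0] using hXv
      | succ i => exact hg i (by omega)
    have hlt : ∀ i j, i < j → j ≤ n → g i ≠ g j := by
      intro i j hij hj heq
      have := E.chain_trans hg i (j - i - 1) (by omega)
      rw [show i + (j - i - 1) + 1 = j by omega, ← heq] at this
      exact E.not_trans_cycle this
    have := ham
      { n := n
        f := fun i => g i.1
        inj := by
          intro i j hij
          rcases Nat.lt_trichotomy i.1 j.1 with h | h | h
          · exact (hlt _ _ h (by omega) hij).elim
          · exact Fin.ext h
          · exact (hlt _ _ h (by omega) hij.symm).elim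
        first := h0
        last := hn
        adj := fun i => hm.adj (Or.inl (hg i.1 i.2)) }
      (fun i hc => E.edge_asymm (hg i.1 i.2) (hc E hm)) hpos
    rw [cpDir_iff] at this
    simp only [h0, h1] at this
    exact hv.2.1 this
  · intro hYv
    rcases (he Y v).1 hYv with h | ⟨h1, h2⟩
    · obtain ⟨p, hp⟩ := hposs
      have hch : ∀ i (hi : i < p.n + 1), Relation.ReflTransGen (fun u w => D.Mk u w ∨ D.Un u w)
          X (p.f ⟨i, hi⟩) := by
        intro i
        induction i with
        | zero => intro _; rw [p.first]
        | succ i ih => intro hi; exact (ih (by omega)).tail (D.chain_of_possibly p hp i (by omega))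
      have h3 := hch p.n (by omega)
      rw [p.last] at h3
      have hK : ∀ a b c, D.Mk a b → D.Un b c → D.Mk a c := fun _ _ _ h1 h2 => h1.shift h2
      obtain ⟨w, h4, h5⟩ := normal_form hK h3
      have h6 : D.Mk Y w := _root_.shift hK (h.shift hv.symm') h4
      exact D.acyclic _ _ h6.edge (rtg_mono (fun _ _ h => h.edge) h5)
    · by_cases hY : Y = X
      · exact hXY hY.symm
      · have := r2 Y hY h1.ne
        omega

theorem amenable_backward [Finite V] (D : Dag V) (X Y : V)
    (h : ∀ v ∈ D.CpSib X, ∀ D' : Dag V, D.MEquiv D' → D'.dSep v Y (D.CpPa v ∪ {X})) :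
    D.Amenable X Y := by
  intro p hp hpos
  by_contra hcon
  rw [cpDir_iff] at hcon
  obtain ⟨v, hpv⟩ : ∃ v, p.f ⟨1, by omega⟩ = v := ⟨_, rfl⟩
  have hX : p.f ⟨0, by omega⟩ = X := p.first
  have hv : D.Un X v := by
    have h1 := (D.chain_of_possibly p hp 0 hpos).resolve_left hcon
    simp only [Nat.zero_add] at h1
    rwa [hX, hpv] at h1
  obtain ⟨E, r, hm, he, r0, r1, r2, rinj, rpeo⟩ := D.exists_member v X hv.symm'
  have hd := h v ((D.cpUndir_iff X v).2 hv) E hm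
  -- the chain from `v` to `Y` avoiding `X`
  have hch : ∀ i (hi : i + 1 < p.n + 1), Relation.ReflTransGen
      (fun u w => (D.Mk u w ∧ w ≠ X) ∨ (D.Un u w ∧ w ≠ X)) v (p.f ⟨i + 1, hi⟩) := by
    intro i
    induction i with
    | zero => intro hi; simp only [Nat.zero_add]; rw [hpv]
    | succ i ih =>
      intro hi
      refine (ih (by omega)).tail ?_
      have hne : p.f ⟨i + 1 + 1, hi⟩ ≠ X := by
        intro hh
        have := p.inj (hh.trans hX.symm)
        simp at this
      rcases D.chain_of_possibly p hp (i + 1) (by omega) with h1 | h1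
      · exact Or.inl ⟨h1, hne⟩
      · exact Or.inr ⟨h1, hne⟩
  have hY := hch (p.n - 1) (by omega)
  simp only [show p.n - 1 + 1 = p.n by omega] at hY
  rw [p.last] at hY
  obtain ⟨w, hw1, hw2⟩ := normal_form
    (U := fun u w => D.Un u w ∧ w ≠ X) (M := fun u w => D.Mk u w ∧ w ≠ X)
    (fun a b c h1 h2 => ⟨h1.1.shift h2.1, h2.2⟩) hY
  -- reorient
  have lem : ∀ w, Relation.ReflTransGen (fun u w => (D.Un u w ∧ r u < r w) ∧ w ≠ X) v w →
      ∀ z, D.Un z w → r z < r w → z ≠ X →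
        Relation.ReflTransGen (fun u w => (D.Un u w ∧ r u < r w) ∧ w ≠ X) v z := by
    intro w hw
    induction hw with
    | refl => intro z _ h2 _; omega
    | @tail u w h1 h2 ih =>
      intro z hz1 hz2 hzX
      by_cases hzu : u = z
      · subst hzu; exact h1
      have huz := rpeo u z w h2.1.1 hz1 h2.1.2 hz2 hzu
      rcases Nat.lt_trichotomy (r u) (r z) with k | k | k
      · exact h1.tail ⟨⟨huz, k⟩, hzX⟩
      · exact (hzu (rinj _ _ k)).elim
      · exact ih z huz.symm' k hzX
  have hvw : Relation.ReflTransGen (fun u w => (D.Un u w ∧ r u < r w) ∧ w ≠ X) v w := by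
    clear hw2
    induction hw1 with
    | refl => exact .refl
    | @tail u w _ h2 ih =>
      rcases Nat.lt_trichotomy (r u) (r w) with k | k | k
      · exact ih.tail ⟨⟨h2.1, k⟩, h2.2⟩
      · exact (h2.1.ne (rinj _ _ k)).elim
      · exact lem u ih w h2.1.symm' k h2.2
  have hvY : Relation.ReflTransGen (fun u w => E.edge u w ∧ w ≠ X) v Y :=
    (rtg_mono (fun a b h => ⟨(he a b).2 (Or.inr h.1), h.2⟩) hvw).trans
      (rtg_mono (fun a b h => ⟨(he a b).2 (Or.inl h.1), h.2⟩) hw2)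
  obtain ⟨A, hA, -, hyA, -, hsep⟩ := E.sep_of_dSep hd
  refine hsep ?_
  have key : ∀ u, Relation.ReflTransGen (fun u w => E.edge u w ∧ w ≠ X) u Y → E.Anc v u →
      Relation.ReflTransGen (E.MStep A ((D.CpPa v ∪ {X}) \ {v, Y})) u Y ∧ u ∈ A := by
    intro u hu
    induction hu using Relation.ReflTransGen.head_induction_on with
    | refl => intro _; exact ⟨.refl, hyA⟩
    | @head a c h1 _ ih =>
      intro hva
      have hvc : E.Anc v c := Relation.ReflTransGen.tail hva h1.1
      obtain ⟨i1, i2⟩ := ih hvc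
      have haA := hA _ _ h1.1 i2
      refine ⟨.head ⟨⟨haA, i2, Or.inl (Or.inl h1.1)⟩, ?_⟩ i1, haA⟩
      rintro ⟨h2 | h2, -⟩
      · exact E.acyclic _ _ (h2 E hm) hvc
      · exact h1.2 h2
  exact (key v hvY .refl).1

end Dag

/-- For distinct `X`, `Y` with `X` a possible ancestor of `Y` in the CPDAG
`G` of the MEC of a DAG, `G` is amenable relative to `(X, Y)` iff for every sibling `v` of
`X`, the set `Pa_G(v) ∪ {X}` d-separates `v` and `Y` in every DAG of the MEC. -/
theorem amenable_iff_siblings_dSep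
    {V : Type*} [Fintype V] (D : Dag V) (X Y : V) (hXY : X ≠ Y)
    (hposs : D.PossAn X Y) :
    D.Amenable X Y ↔
      ∀ v ∈ D.CpSib X, ∀ D' : Dag V, D.MEquiv D' →
        D'.dSep v Y (D.CpPa v ∪ {X}) := by
  constructor
  · intro ham v hv D' hD'
    exact D.amenable_forward X Y hXY hposs ham v ((D.cpUndir_iff X v).1 hv) D' hD'
  · exact D.amenable_backward X Y
end
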